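/- arXiv:1607.00921 — 4 statements merged into one kernel-verified Lean document; each statement's English description precedes it below -/
import Mathlib

section
/- Let Z be the polynomial ring k[X,Y] over a field k, m = (X,Y), and let R be the tiled order consisting of 2×2 matrices (a b; c d) with a,c,d ∈ Z and b ∈ m. Then R is a prime noetherian ring with center isomorphic to Z, R has finite global dimension, R_p is isomorphic to M_2(Z_p) for every height-one prime p of Z, yet the Azumaya locus of R is Maxspec(Z) \ {m}, which is a proper subset of the smooth locus Maxspec(Z). -/
universe u

/-- A two-sided ideal of a (possibly noncommutative) ring is prime. -/
def IsPrimeTS {R : Type*} [Ring R] (P : TwoSidedIdeal R) : Prop :=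
  P ≠ ⊤ ∧ ∀ a b : R, (∀ r : R, a * r * b ∈ P) → a ∈ P ∨ b ∈ P

/-- Height of an element `P` in a poset with respect to a predicate (`prime`):
the supremum of lengths of strictly increasing chains of elements satisfying the
predicate and ending at `P`. -/
noncomputable def primeChainHeight {α : Type*} [Preorder α] (isP : α → Prop) (P : α) : ℕ∞ :=
  sSup {n : ℕ∞ | ∃ m : ℕ, n = (m : ℕ∞) ∧ ∃ f : Fin (m + 1) → α,
    StrictMono f ∧ (∀ i, isP (f i)) ∧ f (Fin.last m) = P}

/-- Height (codimension) of a two-sided ideal: the supremum of lengths of chains of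
prime two-sided ideals descending from it. -/
noncomputable def tsHeight {R : Type*} [Ring R] (P : TwoSidedIdeal R) : ℕ∞ :=
  primeChainHeight IsPrimeTS P

/-- Height of an ideal of a commutative ring. -/
noncomputable def cHeight {C : Type*} [CommRing C] (p : Ideal C) : ℕ∞ :=
  primeChainHeight Ideal.IsPrime p

/-- Contraction `P ∩ C` of a two-sided ideal of `R` to the central subring `C`
(given via the algebra structure map, whose image is central). -/
def contractTS {C R : Type*} [CommRing C] [Ring R] [Algebra C R]
    (P : TwoSidedIdeal R) : Ideal C :=
  Ideal.comap (algebraMap C R) (TwoSidedIdeal.asIdeal P)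

open CategoryTheory in
/-- The `i`-th Ext group `Ext^i_S(M, N)` of (left) modules over an arbitrary ring. -/
noncomputable def ExtGroup (S : Type u) [Ring S] (M N : Type u) [AddCommGroup M] [Module S M]
    [AddCommGroup N] [Module S N] (i : ℕ) : Type _ :=
  letI : HasDerivedCategory (ModuleCat S) := HasDerivedCategory.standard _
  letI : HasExt (ModuleCat S) := hasExt_of_hasDerivedCategory _
  Abelian.Ext (ModuleCat.of S M) (ModuleCat.of S N) i

/-- The homological grade `j_S(M) = min { i | Ext^i_S(M, S) ≠ 0 }` (valued `∞` if
no such `i` exists). -/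
noncomputable def homGrade (S : Type u) [Ring S] (M : Type u) [AddCommGroup M]
    [Module S M] : ℕ∞ :=
  sInf {n : ℕ∞ | ∃ i : ℕ, n = i ∧ ¬ Subsingleton (ExtGroup S M S i)}

/-- The left ideal of `Rᵐᵒᵖ` corresponding to a two-sided ideal of `R`; the quotient
`Rᵐᵒᵖ ⧸ tsOpIdeal P` realises `R/P` as a right `R`-module. -/
def tsOpIdeal {R : Type*} [Ring R] (P : TwoSidedIdeal R) : Ideal Rᵐᵒᵖ where
  carrier := {x | x.unop ∈ P}
  add_mem' ha hb := by simpa using P.add_mem ha hb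
  zero_mem' := by simpa using P.zero_mem
  smul_mem' r x hx := by
    show (r * x).unop ∈ P
    rw [MulOpposite.unop_mul]
    exact P.mul_mem_right _ _ hx

/-- A ring has finite (left) global dimension: there is an `n` such that all Ext groups
vanish in degrees above `n`. -/
def HasFiniteGlobalDimension (S : Type u) [Ring S] : Prop :=
  ∃ n : ℕ, ∀ (M N : Type u) [AddCommGroup M] [Module S M] [AddCommGroup N] [Module S N],
    ∀ i : ℕ, n < i → Subsingleton (ExtGroup S M N i)

open TensorProduct in
/-- The canonical map `R ⊗_C Rᵒᵖ → End_C(R)`, `a ⊗ b ↦ (x ↦ a * x * b)`. -/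
noncomputable def azuMap (C R : Type*) [CommRing C] [Ring R] [Algebra C R] :
    R ⊗[C] Rᵐᵒᵖ →ₗ[C] (R →ₗ[C] R) :=
  TensorProduct.lift <| LinearMap.mk₂ C
    (fun a b => (LinearMap.mulLeft C a).comp (LinearMap.mulRight C b.unop))
    (by intro a a' b; ext x; simp [add_mul])
    (by intro c a b; ext x; simp [smul_mul_assoc])
    (by intro a b b'; ext x; simp [mul_add])
    (by intro c a b; ext x; simp [mul_smul_comm])

/-- `R` is an Azumaya algebra over the commutative ring `C`: it is a faithful
finitely generated projective `C`-module and the enveloping map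
`R ⊗_C Rᵒᵖ → End_C(R)` is bijective. -/
def IsAzumayaAlg (C R : Type*) [CommRing C] [Ring R] [Algebra C R] : Prop :=
  Module.Finite C R ∧ Module.Projective C R ∧ FaithfulSMul C R ∧
    Function.Bijective (azuMap C R)

variable (k : Type u) [Field k]

/-- The maximal ideal `m = ⟨X, Y⟩` of `Z = k[X,Y]`. -/
noncomputable def mXY : Ideal (MvPolynomial (Fin 2) k) :=
  Ideal.span {MvPolynomial.X 0, MvPolynomial.X 1}

theorem tiled_mul_mem {a b : Matrix (Fin 2) (Fin 2) (MvPolynomial (Fin 2) k)}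
    (ha : a 0 1 ∈ mXY k) (hb : b 0 1 ∈ mXY k) : (a * b) 0 1 ∈ mXY k := by
  simp only [Matrix.mul_apply, Fin.sum_univ_two]
  exact Ideal.add_mem _ (Ideal.mul_mem_left _ _ hb) (Ideal.mul_mem_right _ _ ha)

theorem tiled_alg_mem (c : MvPolynomial (Fin 2) k) :
    algebraMap (MvPolynomial (Fin 2) k)
      (Matrix (Fin 2) (Fin 2) (MvPolynomial (Fin 2) k)) c 0 1 ∈ mXY k := by
  simp only [Matrix.algebraMap_matrix_apply]
  rw [if_neg (by decide)]
  exact Ideal.zero_mem _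

/-- The tiled order `R = (Z m; Z Z) ⊆ M₂(Z)`, `Z = k[X,Y]`: the matrices whose
`(1,2)`-entry lies in `m = ⟨X, Y⟩`. -/
noncomputable def TiledR : Subalgebra (MvPolynomial (Fin 2) k)
    (Matrix (Fin 2) (Fin 2) (MvPolynomial (Fin 2) k)) where
  carrier := {A | A 0 1 ∈ mXY k}
  mul_mem' := tiled_mul_mem k
  add_mem' := fun ha hb => Ideal.add_mem (mXY k) ha hb
  algebraMap_mem' := tiled_alg_mem k


section HomAlg
open CategoryTheory TensorProduct

def PDLT (S : Type u) [Ring S] (M : Type u) [AddCommGroup M] [Module S M] (n : ℕ) : Prop :=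
  HasProjectiveDimensionLT (ModuleCat.of S M) n

def GDLT (S : Type u) [Ring S] (n : ℕ) : Prop :=
  ∀ (M : Type u) [AddCommGroup M] [Module S M], PDLT S M n

theorem GDLT.hasFinite {S : Type u} [Ring S] {n : ℕ} (h : GDLT S n) :
    HasFiniteGlobalDimension S := by
  refine ⟨n, fun M N _ _ _ _ i hi => ?_⟩
  let : HasDerivedCategory (ModuleCat S) := HasDerivedCategory.standard _
  let : HasExt (ModuleCat S) := hasExt_of_hasDerivedCategory _
  have := h M
  unfold PDLT at this
  exact HasProjectiveDimensionLT.subsingleton (ModuleCat.of S M) n i hi.le (ModuleCat.of S N)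

section
variable {S : Type u} [Ring S] {A B C : Type u} [AddCommGroup A] [Module S A]
  [AddCommGroup B] [Module S B] [AddCommGroup C] [Module S C]

theorem PDLT.mono {m n : ℕ} (h : PDLT S A m) (hmn : m ≤ n) : PDLT S A n := by
  unfold PDLT at *
  exact hasProjectiveDimensionLT_of_ge _ m n hmn

theorem PDLT.proj [Module.Projective S A] : PDLT S A 1 := by
  unfold PDLT
  rw [← projective_iff_hasProjectiveDimensionLT_one, ← IsProjective.iff_projective]
  infer_instance

theorem PDLT.toProj (h : PDLT S A 1) : Module.Projective S A := by
  unfold PDLT at h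
  rw [← projective_iff_hasProjectiveDimensionLT_one, ← IsProjective.iff_projective] at h
  exact h

theorem PDLT.equiv {n : ℕ} (h : PDLT S A n) (e : A ≃ₗ[S] B) : PDLT S B n := by
  unfold PDLT at *
  exact hasProjectiveDimensionLT_of_iso e.toModuleIso n

variable {f : A →ₗ[S] B} {g : B →ₗ[S] C}

theorem ses_aux (hf : Function.Injective f) (hg : Function.Surjective g)
    (h : Function.Exact f g) :
    (ShortComplex.mk (ModuleCat.ofHom f) (ModuleCat.ofHom g)
      (by ext x; exact h.apply_apply_eq_zero x)).ShortExact where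
  exact := (ShortComplex.ShortExact.moduleCat_exact_iff_function_exact _).mpr h
  mono_f := (ModuleCat.mono_iff_injective _).mpr hf
  epi_g := (ModuleCat.epi_iff_surjective _).mpr hg

theorem PDLT.X3 {n : ℕ} (hf : Function.Injective f) (hg : Function.Surjective g)
    (h : Function.Exact f g) (hA : PDLT S A n) (hB : PDLT S B (n+1)) : PDLT S C (n+1) :=
  (ses_aux hf hg h).hasProjectiveDimensionLT_X₃ n hA hB

theorem PDLT.X2 {n : ℕ} (hf : Function.Injective f) (hg : Function.Surjective g)
    (h : Function.Exact f g) (hA : PDLT S A n) (hB : PDLT S C n) : PDLT S B n :=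
  (ses_aux hf hg h).hasProjectiveDimensionLT_X₂ n hA hB

theorem PDLT.X1 {n : ℕ} (hf : Function.Injective f) (hg : Function.Surjective g)
    (h : Function.Exact f g) (hA : PDLT S B n) (hB : PDLT S C (n+1)) : PDLT S A n :=
  (ses_aux hf hg h).hasProjectiveDimensionLT_X₁ n hA hB
end

theorem proj_tensor {Z : Type u} [CommRing Z] {S : Type u} [Ring S] [Algebra Z S]
    (P : Type u) [AddCommGroup P] [Module Z P] [Module S P] [IsScalarTower Z S P]
    [Module.Projective S P] (N : Type u) [AddCommGroup N] [Module Z N] [Module.Projective Z N] :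
    Module.Projective S (P ⊗[Z] N) := by
  infer_instance

theorem PDLT.tensor {Z : Type u} [CommRing Z] {S : Type u} [Ring S] [Algebra Z S]
    (P : Type u) [AddCommGroup P] [Module Z P] [Module S P] [IsScalarTower Z S P]
    [Module.Projective S P] [Module.Flat Z P] (n : ℕ) :
    ∀ (N : Type u) [AddCommGroup N] [Module Z N], PDLT Z N (n+1) → PDLT S (P ⊗[Z] N) (n+1) := by
  induction n with
  | zero =>
    intro N _ _ h
    have := h.toProj
    have := proj_tensor (Z := Z) (S := S) P N
    exact PDLT.proj
  | succ n ih =>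
    intro N _ _ h
    obtain ⟨F, _, _, _, q, hq⟩ : ∃ (F : Type u) (_ : AddCommGroup F) (_ : Module Z F)
        (_ : Module.Projective Z F) (q : F →ₗ[Z] N), Function.Surjective q :=
      ⟨N →₀ Z, inferInstance, inferInstance, inferInstance, Finsupp.linearCombination Z id,
        Finsupp.linearCombination_id_surjective Z N⟩
    have hex : Function.Exact (LinearMap.ker q).subtype q := LinearMap.exact_subtype_ker_map q
    have hK : PDLT Z (LinearMap.ker q) (n+1) :=
      PDLT.X1 (Subtype.val_injective) hq hex (PDLT.proj.mono (by omega)) h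
    have h1 := ih _ hK
    have : Module.Projective S (P ⊗[Z] F) := proj_tensor P _
    refine PDLT.X3 (f := TensorProduct.AlgebraTensorModule.map (LinearMap.id : P →ₗ[S] P) (LinearMap.ker q).subtype)
      (g := TensorProduct.AlgebraTensorModule.map (LinearMap.id : P →ₗ[S] P) q) ?_ ?_ ?_ h1
      (PDLT.proj.mono (by omega))
    · exact Module.Flat.lTensor_preserves_injective_linearMap (M := P) (LinearMap.ker q).subtype
        Subtype.val_injective
    · exact LinearMap.lTensor_surjective P hq
    · have h2 := lTensor_exact P hex hq
      exact h2

attribute [local instance] RingHomInvPair.of_ringEquiv in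
theorem GDLT.ringEquiv {S T : Type u} [Ring S] [Ring T] (e : S ≃+* T) {n : ℕ}
    (h : GDLT S (n+1)) : GDLT T (n+1) := by
  intro M _ _
  let : Module S M := Module.compHom M (e : S →+* T)
  have := h M
  unfold PDLT at *
  refine ModuleCat.hasProjectiveDimensionLE_of_semiLinearEquiv (M := ModuleCat.of S M)
    (N := ModuleCat.of T M) e ?_ n
  exact
    { toFun := fun x => x
      invFun := fun x => x
      map_add' := fun _ _ => rfl
      map_smul' := fun _ _ => rfl
      left_inv := fun _ => rfl
      right_inv := fun _ => rfl }

theorem GDLT.field (k : Type u) [Field k] : GDLT k 1 := fun _ _ _ => PDLT.proj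

section Hilbert
open Polynomial
variable {A : Type u} [CommRing A] (M : Type u) [AddCommGroup M] [Module A[X] M]
  [Module A M] [IsScalarTower A A[X] M]

noncomputable def hilbX : M →ₗ[A] M where
  toFun m := (X : A[X]) • m
  map_add' := smul_add _
  map_smul' a m := by
    rw [RingHom.id_apply, ← IsScalarTower.algebraMap_smul A[X] a m,
      ← IsScalarTower.algebraMap_smul A[X] a (_ : M), smul_comm]

noncomputable def hilbD : A[X] ⊗[A] M →ₗ[A[X]] A[X] ⊗[A] M :=
  (X : A[X]) • LinearMap.id - TensorProduct.AlgebraTensorModule.map LinearMap.id (hilbX M)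

noncomputable def hilbE : A[X] ⊗[A] M →ₗ[A[X]] M :=
  TensorProduct.AlgebraTensorModule.lift
    (LinearMap.restrictScalars₁₂ A[X] A (LinearMap.lsmul A[X] M))

noncomputable def hilbH : A[X] ⊗[A] M →ₗ[A] A[X] ⊗[A] M :=
  TensorProduct.lift ((Polynomial.basisMonomials A).constr A (fun n =>
    ∑ i ∈ Finset.range n, (TensorProduct.mk A A[X] M (X^i)) ∘ₗ (hilbX M)^(n-1-i)))

theorem hilbH_apply (n : ℕ) (m : M) : hilbH M ((X^n : A[X]) ⊗ₜ[A] m) =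
    ∑ i ∈ Finset.range n, (X^i : A[X]) ⊗ₜ[A] (((hilbX (A := A) M)^(n-1-i)) m) := by
  have : (X^n : A[X]) = Polynomial.basisMonomials A n := by simp [Polynomial.X_pow_eq_monomial]
  rw [hilbH, TensorProduct.lift.tmul, this, Module.Basis.constr_basis]
  simp

theorem hilbX_pow (n : ℕ) (m : M) : ((hilbX (A := A) M)^n) m = (X^n : A[X]) • m := by
  induction n generalizing m with
  | zero => simp
  | succ n ih => rw [pow_succ, Module.End.mul_apply, ih, pow_succ, mul_smul]; rfl

theorem hilbD_apply (p : A[X]) (m : M) : hilbD M (p ⊗ₜ[A] m) =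
    (X * p) ⊗ₜ m - p ⊗ₜ[A] ((X : A[X]) • m) := by
  simp [hilbD, hilbX, TensorProduct.smul_tmul']

theorem hilbE_apply (p : A[X]) (m : M) : hilbE M (p ⊗ₜ[A] m) = p • m := by
  simp [hilbE]

theorem hilb_ext {N : Type u} [AddCommGroup N] [Module A N] {f g : A[X] ⊗[A] M →ₗ[A] N}
    (h : ∀ n m, f ((X^n : A[X]) ⊗ₜ[A] m) = g ((X^n : A[X]) ⊗ₜ[A] m)) : f = g := by
  apply TensorProduct.ext
  apply (Polynomial.basisMonomials A).ext
  intro n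
  ext m
  have : (X^n : A[X]) = Polynomial.basisMonomials A n := by simp [Polynomial.X_pow_eq_monomial]
  simpa [this] using h n m

theorem hilb_HD (x : A[X] ⊗[A] M) : hilbH M (hilbD M x) = x := by
  have : hilbH M ∘ₗ (hilbD M).restrictScalars A = LinearMap.id := by
    apply hilb_ext
    intro n m
    simp only [LinearMap.comp_apply, LinearMap.restrictScalars_apply, hilbD_apply, map_sub,
      ← pow_succ', hilbH_apply, hilbX_pow, LinearMap.id_apply]
    rw [Finset.sum_range_succ, add_sub_right_comm, ← Finset.sum_sub_distrib]
    rw [Finset.sum_eq_zero]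
    · simp
    · intro i hi
      rw [Finset.mem_range] at hi
      rw [smul_smul, ← pow_succ, sub_eq_zero]
      congr 3
      omega
  exact LinearMap.congr_fun this x

theorem hilb_DH (x : A[X] ⊗[A] M) : hilbD M (hilbH M x) = x - (1 : A[X]) ⊗ₜ[A] (hilbE M x) := by
  have : (hilbD M).restrictScalars A ∘ₗ hilbH M =
      LinearMap.id - (TensorProduct.mk A A[X] M 1) ∘ₗ (hilbE M).restrictScalars A := by
    apply hilb_ext
    intro n m
    simp only [LinearMap.comp_apply, LinearMap.restrictScalars_apply, hilbD_apply, map_sum,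
      ← pow_succ', hilbH_apply, hilbX_pow, LinearMap.id_apply, hilbE_apply, LinearMap.sub_apply,
      TensorProduct.mk_apply]
    have h2 := Finset.sum_range_sub (fun i => (X^i : A[X]) ⊗ₜ[A] ((X^(n-i) : A[X]) • m)) n
    simp only [Nat.sub_self, Nat.sub_zero, pow_zero, one_smul] at h2
    rw [← h2]
    refine Finset.sum_congr rfl fun i hi => ?_
    rw [Finset.mem_range] at hi
    rw [smul_smul, ← pow_succ', show n - 1 - i + 1 = n - i by omega,
      show n - (i + 1) = n - 1 - i by omega]
  exact LinearMap.congr_fun this x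

end Hilbert

theorem GDLT.polynomial {A : Type u} [CommRing A] {n : ℕ} (h : GDLT A (n+1)) :
    GDLT (Polynomial A) (n+2) := by
  intro M _ _
  let : Module A M := Module.compHom M (algebraMap A (Polynomial A))
  have : IsScalarTower A (Polynomial A) M :=
    ⟨fun a p m => by rw [Algebra.smul_def, mul_smul]; rfl⟩
  have h1 : PDLT (Polynomial A) (Polynomial A ⊗[A] M) (n+1) := PDLT.tensor _ n M (h M)
  refine PDLT.X3 (f := hilbD M) (g := hilbE M) ?_ ?_ ?_ h1 (h1.mono (by omega))
  · exact Function.LeftInverse.injective (hilb_HD M)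
  · intro m
    exact ⟨1 ⊗ₜ m, by simp [hilbE_apply]⟩
  · intro x
    constructor
    · intro hx
      refine ⟨hilbH M x, ?_⟩
      rw [hilb_DH, hx]
      simp
    · rintro ⟨y, rfl⟩
      have h3 := hilb_DH M (hilbD M y)
      rw [hilb_HD] at h3
      have h4 := congrArg (hilbE M) h3
      rw [map_sub, hilbE_apply, one_smul, sub_self] at h4
      exact h4

theorem GDLT.mvPolynomial (k : Type u) [Field k] (n : ℕ) :
    GDLT (MvPolynomial (Fin n) k) (n+1) := by
  induction n with
  | zero => exact (GDLT.field k).ringEquiv (MvPolynomial.isEmptyRingEquiv k (Fin 0)).symm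
  | succ n ih => exact ih.polynomial.ringEquiv (MvPolynomial.finSuccEquiv k n).symm.toRingEquiv

theorem GDLT.localization {Z : Type u} [CommRing Z] {n : ℕ} (h : GDLT Z (n+1)) (S : Submonoid Z) :
    GDLT (Localization S) (n+1) := by
  intro M _ _
  let : Module Z M := Module.compHom M (algebraMap Z (Localization S))
  have : IsScalarTower Z (Localization S) M :=
    ⟨fun a p m => by rw [Algebra.smul_def, mul_smul]; rfl⟩
  have h1 : PDLT (Localization S) (Localization S ⊗[Z] M) (n+1) := PDLT.tensor _ n M (h M)
  exact h1.equiv (IsLocalization.moduleLid S (Localization S) M)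

end HomAlg

section Tiled
open TensorProduct

theorem mXY_eq : mXY k = RingHom.ker (MvPolynomial.constantCoeff (σ := Fin 2) (R := k)) := by
  apply le_antisymm
  · rw [mXY, Ideal.span_le]
    rintro x (rfl | rfl) <;> simp
  · intro p hp
    have h1 : mXY k = Ideal.span (MvPolynomial.X '' Set.univ) := by
      rw [mXY]
      congr 1
      ext x
      simp [Fin.exists_fin_two, eq_comm]
    rw [h1, MvPolynomial.mem_ideal_span_X_image]
    intro m hm
    rw [RingHom.mem_ker, MvPolynomial.constantCoeff_eq] at hp
    by_contra hcon
    have : m = 0 := by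
      ext i
      by_contra h
      exact hcon ⟨i, trivial, h⟩
    subst this
    exact (MvPolynomial.mem_support_iff.mp hm) hp

theorem mXY_max : (mXY k).IsMaximal := by
  rw [mXY_eq]
  exact RingHom.ker_isMaximal_of_surjective _
    (fun c => ⟨MvPolynomial.C c, by simp⟩)

abbrev Zk := MvPolynomial (Fin 2) k

/-- abstract presentation of the tiled order -/
structure TD (R : Type u) [Ring R] [Algebra (Zk k) R] where
  ι : R →ₐ[Zk k] Matrix (Fin 2) (Fin 2) (Zk k)
  inj : Function.Injective ι
  mem : ∀ x, ι x 0 1 ∈ mXY k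
  mat : ∀ a b c d : Zk k, b ∈ mXY k → R
  ι_mat : ∀ a b c d hb, ι (mat a b c d hb) = !![a, b; c, d]

noncomputable def TD.tiled : TD k (TiledR k) where
  ι := (TiledR k).val
  inj := Subtype.val_injective
  mem := fun x => x.2
  mat := fun a b c d hb => ⟨!![a, b; c, d], hb⟩
  ι_mat := fun _ _ _ _ _ => rfl

variable {k}
namespace TD
variable {R : Type u} [Ring R] [Algebra (Zk k) R] (T : TD k R)

attribute [local simp] ι_mat Matrix.mul_apply Fin.sum_univ_two

theorem ext (T : TD k R) {x y : R} (h00 : T.ι x 0 0 = T.ι y 0 0) (h01 : T.ι x 0 1 = T.ι y 0 1)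
    (h10 : T.ι x 1 0 = T.ι y 1 0) (h11 : T.ι x 1 1 = T.ι y 1 1) : x = y := by
  apply T.inj
  ext1 i j
  fin_cases i <;> fin_cases j <;> simp [*]

noncomputable def e1 : R := T.mat 1 0 0 0 (Ideal.zero_mem _)
noncomputable def e2 : R := T.mat 0 0 0 1 (Ideal.zero_mem _)
noncomputable def f21 : R := T.mat 0 0 1 0 (Ideal.zero_mem _)
noncomputable def g12 (b : Zk k) (hb : b ∈ mXY k) : R := T.mat 0 b 0 0 hb

attribute [local simp] e1 e2 f21 g12

theorem e1e1 : T.e1 * T.e1 = T.e1 := by apply T.ext <;> simp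
theorem e1f : T.e1 * T.f21 = 0 := by apply T.ext <;> simp
theorem fe1 : T.f21 * T.e1 = T.f21 := by apply T.ext <;> simp
theorem e1e2 : T.e1 + T.e2 = 1 := by apply T.ext <;> simp
theorem gf (b hb) : T.g12 b hb * T.f21 = b • T.e1 := by apply T.ext <;> simp
theorem fg (b hb) : T.f21 * T.g12 b hb = b • T.e2 := by apply T.ext <;> simp
theorem g_e1 (b hb) : T.g12 b hb = T.e1 * T.g12 b hb := by apply T.ext <;> simp
theorem e2_mul (x : R) : T.e2 * x = T.ι x 1 0 • T.f21 + T.ι x 1 1 • T.e2 := by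
  apply T.ext <;> simp
theorem mul_eq (x : R) : x = x * T.e1 + T.e1 * x * T.e2 + T.ι x 1 1 • T.e2 := by
  apply T.ext <;> simp [Matrix.vecMul, dotProduct]

noncomputable def PP : Submodule R R where
  carrier := {x | x * T.e1 = x}
  add_mem' := fun {a b} ha hb => by
    change (a + b) * T.e1 = a + b
    rw [add_mul, ha, hb]
  zero_mem' := zero_mul _
  smul_mem' := fun c x hx => by
    change c * x * T.e1 = c * x
    rw [mul_assoc, hx]

theorem PP_proj : Module.Projective R T.PP := by
  refine Module.Projective.of_split (M := R) T.PP.subtype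
    { toFun := fun x => ⟨x * T.e1, by
        change x * T.e1 * T.e1 = x * T.e1; rw [mul_assoc, e1e1]⟩
      map_add' := fun x y => Subtype.ext (add_mul x y _)
      map_smul' := fun x y => Subtype.ext (mul_assoc x y _) } ?_
  apply LinearMap.ext
  intro x
  exact Subtype.ext x.2

noncomputable def pe : T.PP := ⟨T.e1, T.e1e1⟩
noncomputable def pf : T.PP := ⟨T.f21, T.fe1⟩

theorem PP_eq (p : T.PP) : p = T.ι p.1 0 0 • T.pe + T.ι p.1 1 0 • T.pf := by
  apply Subtype.ext
  change p.1 = T.ι p.1 0 0 • T.e1 + T.ι p.1 1 0 • T.f21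
  have h : p.1 * T.e1 = p.1 := p.2
  have h1 := congrArg (fun x => T.ι x 0 1) h
  have h2 := congrArg (fun x => T.ι x 1 1) h
  simp at h1 h2
  apply T.ext <;> simp [← h1, ← h2]

theorem PP_flat : Module.Flat (Zk k) T.PP := by
  let e : T.PP ≃ₗ[Zk k] (Zk k × Zk k) :=
    { toFun := fun p => (T.ι p.1 0 0, T.ι p.1 1 0)
      invFun := fun q => q.1 • T.pe + q.2 • T.pf
      map_add' := fun x y => by simp
      map_smul' := fun x y => by simp
      left_inv := fun p => (T.PP_eq p).symm
      right_inv := fun q => by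
        change (T.ι (q.1 • T.e1 + q.2 • T.f21) 0 0, T.ι (q.1 • T.e1 + q.2 • T.f21) 1 0) = q
        simp }
  exact Module.Flat.of_linearEquiv e

section Mod
variable (M : Type u) [AddCommGroup M] [Module (Zk k) M] [Module R M]
  [IsScalarTower (Zk k) R M]

noncomputable def e1M : Submodule (Zk k) M where
  carrier := {x | T.e1 • x = x}
  add_mem' := fun {a b} ha hb => by
    change T.e1 • (a + b) = a + b
    rw [smul_add, ha, hb]
  zero_mem' := smul_zero _
  smul_mem' := fun c x hx => by
    change T.e1 • (c • x) = c • x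
    rw [← algebraMap_smul R c x, ← mul_smul, ← Algebra.commutes, mul_smul, hx]

noncomputable def epsM : T.PP ⊗[Zk k] (T.e1M M) →ₗ[R] M :=
  TensorProduct.AlgebraTensorModule.lift
    { toFun := fun p =>
        { toFun := fun x => p.1 • x.1
          map_add' := fun x y => smul_add _ _ _
          map_smul' := fun c x => by
            change p.1 • (c • x.1) = c • (p.1 • x.1)
            rw [← algebraMap_smul R c x.1, ← mul_smul, ← Algebra.commutes, mul_smul,
              algebraMap_smul] }
      map_add' := fun p q => by ext x; exact add_smul _ _ _
      map_smul' := fun p q => by ext x; exact mul_smul _ _ _ }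

theorem epsM_apply (p : T.PP) (x : T.e1M M) : T.epsM M (p ⊗ₜ x) = p.1 • x.1 := rfl

variable {M}

theorem tens_eq (t : T.PP ⊗[Zk k] (T.e1M M)) :
    ∃ y z : T.e1M M, t = T.pe ⊗ₜ y + T.pf ⊗ₜ z := by
  induction t with
  | zero => exact ⟨0, 0, by simp⟩
  | tmul p x =>
    refine ⟨T.ι p.1 0 0 • x, T.ι p.1 1 0 • x, ?_⟩
    conv_lhs => rw [T.PP_eq p]
    rw [add_tmul, smul_tmul, smul_tmul]
  | add s t hs ht =>
    obtain ⟨y, z, rfl⟩ := hs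
    obtain ⟨y', z', rfl⟩ := ht
    refine ⟨y + y', z + z', ?_⟩
    rw [tmul_add, tmul_add]
    abel

theorem epsM_ker (t : T.PP ⊗[Zk k] (T.e1M M)) (ht : T.epsM M t = 0) :
    ∃ z : T.e1M M, t = T.pf ⊗ₜ z ∧ T.f21 • z.1 = 0 := by
  obtain ⟨y, z, rfl⟩ := T.tens_eq t
  rw [map_add, epsM_apply, epsM_apply] at ht
  have hy : T.e1 • y.1 = y.1 := y.2
  change T.e1 • y.1 + T.f21 • z.1 = 0 at ht
  have h2 := congrArg (fun w => T.e1 • w) ht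
  simp only [smul_add, ← mul_smul, e1e1, e1f, zero_smul, add_zero, smul_zero] at h2
  have hy0 : y = 0 := Subtype.ext (hy.symm.trans h2)
  refine ⟨z, by rw [hy0, tmul_zero, zero_add], ?_⟩
  rwa [h2, zero_add] at ht

theorem e1_ker (t : T.PP ⊗[Zk k] (T.e1M M)) (ht : T.epsM M t = 0) : T.e1 • t = 0 := by
  obtain ⟨z, rfl, -⟩ := T.epsM_ker t ht
  rw [smul_tmul']
  have : T.e1 • (T.pf : T.PP) = 0 := Subtype.ext T.e1f
  rw [this, zero_tmul]

theorem pd_FM (N : Type u) [AddCommGroup N] [Module (Zk k) N] :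
    PDLT R (T.PP ⊗[Zk k] N) 3 := by
  have := T.PP_proj
  have := T.PP_flat
  exact PDLT.tensor T.PP 2 N (GDLT.mvPolynomial k 2 N)

theorem pd_nice (h1 : ∀ z : M, T.e1 • z = z → T.f21 • z = 0 → z = 0)
    (h2 : ∀ x : M, ∃ y : M, T.e1 • y = y ∧ T.f21 • y = T.e2 • x) : PDLT R M 3 := by
  refine (T.pd_FM (T.e1M M)).equiv (LinearEquiv.ofBijective (T.epsM M) ⟨?_, ?_⟩)
  · rw [injective_iff_map_eq_zero]
    intro t ht
    obtain ⟨z, rfl, hz⟩ := T.epsM_ker t ht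
    have : z = 0 := Subtype.ext (h1 z.1 z.2 hz)
    rw [this, tmul_zero]
  · intro x
    obtain ⟨y, hy1, hy⟩ := h2 x
    have hx1 : T.e1 • (T.e1 • x) = T.e1 • x := by rw [← mul_smul, e1e1]
    refine ⟨T.pe ⊗ₜ ⟨T.e1 • x, hx1⟩ + T.pf ⊗ₜ ⟨y, hy1⟩, ?_⟩
    rw [map_add, epsM_apply, epsM_apply]
    change T.e1 • (T.e1 • x) + T.f21 • y = x
    rw [hx1, hy, ← add_smul, e1e2, one_smul]

theorem pd_nice' (V : Type u) [AddCommGroup V] [Module R V]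
    (h1 : ∀ z : V, T.e1 • z = z → T.f21 • z = 0 → z = 0)
    (h2 : ∀ x : V, ∃ y : V, T.e1 • y = y ∧ T.f21 • y = T.e2 • x) : PDLT R V 3 := by
  let : Module (Zk k) V := Module.compHom V (algebraMap (Zk k) R)
  have : IsScalarTower (Zk k) R V :=
    ⟨fun a p m => by rw [Algebra.smul_def, mul_smul]; rfl⟩
  exact T.pd_nice h1 h2

/-- Modules killed by `e1`. -/
theorem pd_killed (V : Type u) [AddCommGroup V] [Module R V] [Module (Zk k) V]
    [IsScalarTower (Zk k) R V]
    (hV : ∀ v : V, T.e1 • v = 0) : PDLT R V 4 := by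
  have e2v : ∀ v : V, T.e2 • v = v := fun v => by
    have := congrArg (fun r : R => r • v) T.e1e2
    simpa only [add_smul, hV, zero_add, one_smul] using this
  have hm : ∀ b ∈ mXY k, ∀ v : V, b • v = 0 := fun b hb v => by
    rw [← e2v v, ← smul_assoc, ← T.fg b hb, T.g_e1, mul_smul, mul_smul, hV, smul_zero]
  have hrv : ∀ (r : R) (v : V), r • v = T.ι r 1 1 • v := fun r v => by
    conv_lhs => rw [T.mul_eq r]
    rw [add_smul, add_smul, mul_smul, mul_smul, mul_smul, hV, hV, smul_zero, smul_assoc, e2v]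
    simp
  let : Module k V := Module.compHom V (MvPolynomial.C : k →+* Zk k)
  have hzv : ∀ (z : Zk k) (v : V), z • v = (MvPolynomial.constantCoeff z : k) • v := fun z v => by
    change z • v = (MvPolynomial.C (MvPolynomial.constantCoeff z) : Zk k) • v
    rw [← sub_eq_zero, ← sub_smul]
    apply hm
    rw [mXY_eq, RingHom.mem_ker]
    simp
  let bs := Module.Basis.ofVectorSpace k V
  let B := Module.Basis.ofVectorSpaceIndex k V
  let g : (B →₀ R) →ₗ[R] V := Finsupp.linearCombination R bs
  have hgx : ∀ x : B →₀ R, g x = 0 ↔ ∀ v, T.ι (x v) 1 1 ∈ mXY k := by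
    intro x
    have h1 : g x = Finsupp.linearCombination k bs
        (x.mapRange (fun r => MvPolynomial.constantCoeff (T.ι r 1 1)) (by simp)) := by
      simp only [g, Finsupp.linearCombination_apply]
      rw [Finsupp.sum_mapRange_index (by simp)]
      refine Finsupp.sum_congr fun v _ => ?_
      rw [hrv, hzv]
    rw [h1]
    have h2 := linearIndependent_iff.mp bs.linearIndependent
      (x.mapRange (fun r => MvPolynomial.constantCoeff (T.ι r 1 1)) (by simp))
    constructor
    · intro h v
      have := DFunLike.congr_fun (h2 h) v
      rw [mXY_eq, RingHom.mem_ker]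
      simpa using this
    · intro h
      have : x.mapRange (fun r => MvPolynomial.constantCoeff (T.ι r 1 1)) (by simp) = 0 := by
        ext v
        have := h v
        rw [mXY_eq, RingHom.mem_ker] at this
        simpa using this
      rw [this, map_zero]
  have hg : Function.Surjective g := by
    intro v
    have hv : v ∈ Submodule.span k (Set.range bs) := by rw [bs.span_eq]; trivial
    induction hv using Submodule.span_induction with
    | mem x hx =>
      obtain ⟨i, rfl⟩ := hx
      exact ⟨Finsupp.single i 1, by simp [g]⟩
    | zero => exact ⟨0, map_zero _⟩
    | add x y _ _ hx hy =>
      obtain ⟨a, rfl⟩ := hx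
      obtain ⟨b, rfl⟩ := hy
      exact ⟨a + b, map_add _ _ _⟩
    | smul c x _ hx =>
      obtain ⟨a, rfl⟩ := hx
      refine ⟨algebraMap (Zk k) R (MvPolynomial.C c) • a, ?_⟩
      rw [map_smul, algebraMap_smul]
      rfl
  let K := LinearMap.ker g
  have hK : PDLT R K 3 := by
    refine T.pd_nice' K ?_ ?_
    · intro z hz1 hz
      apply Subtype.ext
      ext v
      have h1 : T.e1 * z.1 v = z.1 v :=
        DFunLike.congr_fun (congrArg Subtype.val hz1) v
      have h2 : T.f21 * z.1 v = 0 :=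
        DFunLike.congr_fun (congrArg Subtype.val hz) v
      change z.1 v = 0
      rw [← h1]
      have h4 := congrArg (fun x => T.ι x 1 0) h2
      have h5 := congrArg (fun x => T.ι x 1 1) h2
      simp at h4 h5
      apply T.ext <;> simp [h4, h5]
    · intro x
      have hx := (hgx x.1).mp x.2
      classical
      let up : R → R := fun r => if h : T.ι r 1 1 ∈ mXY k then
        T.mat (T.ι r 1 0) (T.ι r 1 1) 0 0 h else 0
      have up0 : up 0 = 0 := by
        simp only [up]
        split_ifs
        · apply T.ext <;> simp
        · rfl
      let y : B →₀ R := x.1.mapRange up up0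
      have hyv : ∀ v, y v = T.mat (T.ι (x.1 v) 1 0) (T.ι (x.1 v) 1 1) 0 0 (hx v) := fun v => by
        simp only [y, Finsupp.mapRange_apply, up]
        rw [dif_pos]
      have hyK : y ∈ K := by
        refine (hgx y).mpr fun v => ?_
        rw [hyv]
        simp
      have hy1 : T.e1 • (⟨y, hyK⟩ : K) = ⟨y, hyK⟩ := by
        apply Subtype.ext
        ext v
        change T.e1 * y v = y v
        rw [hyv]
        apply T.ext <;> simp
      refine ⟨⟨y, hyK⟩, hy1, ?_⟩
      apply Subtype.ext
      ext v
      change T.f21 * y v = T.e2 * x.1 v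
      rw [hyv]
      apply T.ext <;> simp
  exact PDLT.X3 (f := K.subtype) (g := g) Subtype.val_injective hg
    (LinearMap.exact_subtype_ker_map g) hK (PDLT.proj.mono (by omega))

theorem pd_killed' (V : Type u) [AddCommGroup V] [Module R V]
    (hV : ∀ v : V, T.e1 • v = 0) : PDLT R V 4 := by
  let : Module (Zk k) V := Module.compHom V (algebraMap (Zk k) R)
  have : IsScalarTower (Zk k) R V :=
    ⟨fun a p m => by rw [Algebra.smul_def, mul_smul]; rfl⟩
  exact T.pd_killed V hV

end Mod

theorem gd (T : TD k R) : GDLT R 5 := by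
  intro M _ _
  let : Module (Zk k) M := Module.compHom M (algebraMap (Zk k) R)
  have : IsScalarTower (Zk k) R M :=
    ⟨fun a p m => by rw [Algebra.smul_def, mul_smul]; rfl⟩
  let ε := T.epsM M
  have hF := T.pd_FM (T.e1M M)
  have hK : PDLT R (LinearMap.ker ε) 4 := by
    exact T.pd_killed' _ fun v => Subtype.ext (T.e1_ker v.1 v.2)
  have hI : PDLT R (LinearMap.range ε) 5 :=
    PDLT.X3 (f := (LinearMap.ker ε).subtype) (g := ε.rangeRestrict) Subtype.val_injective
      ε.surjective_rangeRestrict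
      (by intro x; simp [← LinearMap.mem_ker]) hK (hF.mono (by omega))
  have hC : PDLT R (M ⧸ LinearMap.range ε) 4 := by
    refine T.pd_killed' _ fun v => ?_
    obtain ⟨v, rfl⟩ := Submodule.mkQ_surjective _ v
    rw [← map_smul]
    change Submodule.Quotient.mk _ = _
    rw [Submodule.Quotient.mk_eq_zero]
    have h1 : T.e1 • T.e1 • v = T.e1 • v := by rw [← mul_smul, e1e1]
    refine ⟨T.pe ⊗ₜ ⟨T.e1 • v, h1⟩, h1⟩
  exact PDLT.X2 (f := (LinearMap.range ε).subtype) (g := (LinearMap.range ε).mkQ)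
    Subtype.val_injective (Submodule.mkQ_surjective _)
    (by intro x; simp) hI (hC.mono (by omega))

end TD

theorem part_gd : HasFiniteGlobalDimension (TiledR k) := (TD.tiled k).gd.hasFinite
theorem part_loc (n : Ideal (MvPolynomial (Fin 2) k)) [n.IsPrime] :
    HasFiniteGlobalDimension (Localization.AtPrime n) :=
  ((GDLT.mvPolynomial k 2).localization n.primeCompl).hasFinite

end Tiled

section TiledC
open TensorProduct

theorem isAzumayaAlg_of (C A : Type*) [CommRing C] [Ring A] [Algebra C A] [h : IsAzumaya C A] :
    IsAzumayaAlg C A := by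
  refine ⟨inferInstance, inferInstance, inferInstance, ?_⟩
  have h1 : azuMap C A = (AlgHom.mulLeftRight C A).toLinearMap := by
    apply TensorProduct.ext'
    intro a b
    apply LinearMap.ext
    intro x
    simp [azuMap, mul_assoc]
  rw [h1]
  exact h.bij

theorem azu_stable {C A F : Type*} [CommRing C] [Ring A] [Algebra C A] [CommRing F]
    [Algebra C F] (h : IsAzumayaAlg C A) (χ : A →ₐ[C] F) (φ : A →ₗ[C] A) (x : A)
    (hx : χ x = 0) : χ (φ x) = 0 := by
  obtain ⟨t, rfl⟩ := h.2.2.2.2 φ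
  induction t with
  | zero => simp
  | tmul a b => simp [azuMap, hx]
  | add s t hs ht => simp [hs, ht]

variable {k}
namespace TD
variable {R : Type u} [Ring R] [Algebra (Zk k) R] (T : TD k R)

attribute [local simp] ι_mat Matrix.mul_apply Fin.sum_univ_two e1 e2 f21 g12

theorem x0mem : (MvPolynomial.X 0 : Zk k) ∈ mXY k :=
  Ideal.subset_span (by simp)

theorem prime (T : TD k R) (a b : R) (h : ∀ r : R, a * r * b = 0) : a = 0 ∨ b = 0 := by
  have key : ∀ p i j q, T.ι a p i * T.ι b j q = 0 := by
    have hX : (MvPolynomial.X 0 : Zk k) ≠ 0 := MvPolynomial.X_ne_zero 0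
    have H : ∀ r p q, (T.ι a * T.ι r * T.ι b) p q = 0 := fun r p q => by
      rw [← map_mul, ← map_mul, h, map_zero]; rfl
    intro p i j q
    fin_cases i <;> fin_cases j
    · simpa using H T.e1 p q
    · have := H (T.g12 _ x0mem) p q
      simp only [g12, ι_mat, Matrix.mul_apply, Fin.sum_univ_two] at this
      simp at this
      simpa [hX, or_assoc] using this
    · simpa using H T.f21 p q
    · simpa using H T.e2 p q
  by_contra hcon
  push Not at hcon
  obtain ⟨ha, hb⟩ := hcon
  have h1 : ∃ p i, T.ι a p i ≠ 0 := by
    by_contra hc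
    push Not at hc
    exact ha (T.ext (by simp [hc]) (by simp [hc]) (by simp [hc]) (by simp [hc]))
  have h2 : ∃ p i, T.ι b p i ≠ 0 := by
    by_contra hc
    push Not at hc
    exact hb (T.ext (by simp [hc]) (by simp [hc]) (by simp [hc]) (by simp [hc]))
  obtain ⟨p, i, h1⟩ := h1
  obtain ⟨j, q, h2⟩ := h2
  exact mul_ne_zero h1 h2 (key p i j q)

theorem noeth (T : TD k R) : IsNoetherianRing R := by
  have : IsNoetherian (Zk k) R :=
    isNoetherian_of_injective T.ι.toLinearMap T.inj
  exact isNoetherian_of_tower (Zk k) this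

theorem center (T : TD k R) : Nonempty (Subring.center R ≃+* Zk k) := by
  let f : Zk k →+* Subring.center R :=
    (algebraMap (Zk k) R).codRestrict _ fun z => by
      rw [Subring.mem_center_iff]
      intro g
      exact (Algebra.commutes z g).symm
  refine ⟨(RingEquiv.ofBijective f ⟨?_, ?_⟩).symm⟩
  · intro a b hab
    have h1 : algebraMap (Zk k) R a = algebraMap (Zk k) R b := congrArg Subtype.val hab
    have h2 := congrArg (fun x => T.ι x 0 0) h1
    simpa [Matrix.algebraMap_matrix_apply] using h2
  · rintro ⟨x, hx⟩
    rw [Subring.mem_center_iff] at hx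
    refine ⟨T.ι x 0 0, Subtype.ext ?_⟩
    change algebraMap (Zk k) R (T.ι x 0 0) = x
    have a1 := congrArg (fun x => T.ι x 0 1) (hx T.e1)
    have a2 := congrArg (fun x => T.ι x 1 0) (hx T.e1)
    have a3 := congrArg (fun x => T.ι x 1 0) (hx T.f21)
    simp at a1 a2 a3
    apply T.ext <;> simp [Matrix.algebraMap_matrix_apply, a1, a2, a3]

section Loc
variable (p : Ideal (Zk k)) [p.IsPrime] (S : Type u) [CommRing S] [Algebra (Zk k) S]
  [IsLocalization.AtPrime S p]

noncomputable def phi : R →ₐ[Zk k] Matrix (Fin 2) (Fin 2) S :=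
  ((Algebra.ofId (Zk k) S).mapMatrix).comp T.ι

theorem phi_apply (x : R) (i j) : T.phi S x i j = algebraMap (Zk k) S (T.ι x i j) := rfl

theorem phi_loc (T : TD k R) (hp : ¬ mXY k ≤ p) :
    IsLocalizedModule p.primeCompl (T.phi S).toLinearMap := by
  obtain ⟨s, hs, hsp⟩ := Set.not_subset.mp hp
  have hinj : Function.Injective (algebraMap (Zk k) S) :=
    IsLocalization.injective S p.primeCompl_le_nonZeroDivisors
  refine ⟨?_, ?_, ?_⟩
  · intro x
    have hu : IsUnit (algebraMap (Zk k) S x) := IsLocalization.map_units S x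
    have := hu.map (Algebra.lsmul (A := S) (Zk k) (Zk k) (Matrix (Fin 2) (Fin 2) S))
    convert this using 1
    apply LinearMap.ext
    intro m
    simp
  · intro y
    obtain ⟨b, hb⟩ := IsLocalization.exist_integer_multiples_of_finite p.primeCompl
      (fun ij : Fin 2 × Fin 2 => y ij.1 ij.2)
    have hb' : ∀ i j, ∃ z : Zk k, algebraMap (Zk k) S z = (b : Zk k) • y i j := fun i j => hb (i, j)
    choose z hz using hb'
    refine ⟨⟨T.mat (s * z 0 0) (s * z 0 1) (s * z 1 0) (s * z 1 1)
      (Ideal.mul_mem_right _ _ hs), ⟨s, hsp⟩ * b⟩, ?_⟩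
    ext i j
    change ((s * (b : Zk k)) • y) i j = algebraMap (Zk k) S (T.ι _ i j)
    have : T.ι (T.mat (s * z 0 0) (s * z 0 1) (s * z 1 0) (s * z 1 1)
      (Ideal.mul_mem_right _ _ hs)) i j = s * z i j := by
      rw [ι_mat]
      fin_cases i <;> fin_cases j <;> rfl
    rw [this, map_mul, hz, Matrix.smul_apply, mul_smul, Algebra.smul_def]
  · intro x y hxy
    refine ⟨1, ?_⟩
    rw [one_smul, one_smul]
    have h : ∀ i j, T.ι x i j = T.ι y i j := fun i j =>
      hinj (congrFun (congrFun hxy i) j)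
    exact T.ext (h _ _) (h _ _) (h _ _) (h _ _)

theorem locEquiv (T : TD k R) (hp : ¬ mXY k ≤ p) :
    Nonempty ((S ⊗[Zk k] R) ≃ₐ[S] Matrix (Fin 2) (Fin 2) S) := by
  have h1 := T.phi_loc p S hp
  have h2 := (isLocalizedModule_iff_isBaseChange p.primeCompl S (T.phi S).toLinearMap).mp h1
  let Ψ : (S ⊗[Zk k] R) →ₐ[S] Matrix (Fin 2) (Fin 2) S :=
    Algebra.TensorProduct.lift (Algebra.ofId S _) (T.phi S)
      (fun x y => Algebra.commutes x _)
  have h3 : ∀ t, Ψ t = h2.equiv t := by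
    intro t
    induction t with
    | zero => rw [map_zero, map_zero]
    | tmul a b =>
      rw [h2.equiv_tmul, Algebra.smul_def]
      exact Algebra.TensorProduct.lift_tmul _ _ _ a b
    | add s t hs ht => rw [map_add, map_add, hs, ht]
  refine ⟨AlgEquiv.ofBijective Ψ ?_⟩
  have : (Ψ : (S ⊗[Zk k] R) → Matrix (Fin 2) (Fin 2) S) = h2.equiv := funext h3
  rw [this]
  exact h2.equiv.bijective

theorem azu_of (T : TD k R) (hp : ¬ mXY k ≤ p) : IsAzumayaAlg S (S ⊗[Zk k] R) := by
  obtain ⟨e⟩ := T.locEquiv p S hp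
  have := IsAzumaya.matrix S (Fin 2)
  have := IsAzumaya.of_AlgEquiv S _ _ e.symm
  exact isAzumayaAlg_of _ _

noncomputable def swap : R →ₗ[Zk k] R where
  toFun := fun x => T.mat (T.ι x 1 1) (T.ι x 0 1) (T.ι x 1 0) (T.ι x 0 0) (T.mem x)
  map_add' := fun x y => by apply T.ext <;> simp
  map_smul' := fun x y => by apply T.ext <;> simp

noncomputable def chi (F : Type*) [CommRing F] [Algebra (Zk k) F]
    (hF : ∀ z ∈ mXY k, algebraMap (Zk k) F z = 0) : R →ₐ[Zk k] F where
  toFun := fun x => algebraMap (Zk k) F (T.ι x 0 0)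
  map_one' := by simp
  map_mul' := fun x y => by simp [hF _ (T.mem x)]
  map_zero' := by simp
  map_add' := by simp
  commutes' := by simp [Matrix.algebraMap_matrix_apply]

theorem not_azu (T : TD k R) [IsLocalRing S] (hp : p = mXY k) : ¬ IsAzumayaAlg S (S ⊗[Zk k] R) := by
  intro h
  let F := IsLocalRing.ResidueField S
  have hF : ∀ z ∈ mXY k, algebraMap (Zk k) F z = 0 := by
    intro z hz
    rw [IsScalarTower.algebraMap_apply (Zk k) S F]
    refine (IsLocalRing.residue_eq_zero_iff _).mpr ?_
    rw [← hp] at hz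
    exact (IsLocalization.AtPrime.to_map_mem_maximal_iff S p z).mpr hz
  let χ : (S ⊗[Zk k] R) →ₐ[S] F :=
    Algebra.TensorProduct.lift (Algebra.ofId S F) (T.chi F hF) (fun x y => mul_comm _ _)
  have h1 := azu_stable h χ (T.swap.baseChange S) (1 ⊗ₜ T.e2) (by simp [χ, chi])
  simp [χ, chi, swap] at h1

theorem azu_iff (T : TD k R) [IsLocalRing S] (hp : p.IsMaximal) :
    IsAzumayaAlg S (S ⊗[Zk k] R) ↔ p ≠ mXY k := by
  constructor
  · intro h hpe
    exact T.not_azu p S hpe h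
  · intro h
    refine T.azu_of p S fun hle => h ?_
    exact ((mXY_max k).eq_of_le hp.ne_top hle).symm

end Loc
end TD

theorem height_one (p : Ideal (Zk k)) (hp : p.IsPrime) (h : cHeight p = 1) : ¬ mXY k ≤ p := by
  intro hle
  have hpe := (mXY_max k).eq_of_le hp.ne_top hle
  have hX : Prime (MvPolynomial.X 0 : Zk k) := MvPolynomial.X_prime
  let q : Ideal (Zk k) := Ideal.span {MvPolynomial.X 0}
  have hq : q.IsPrime := (Ideal.span_singleton_prime hX.ne_zero).mpr hX
  have h0 : (⊥ : Ideal (Zk k)) < q := by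
    rw [bot_lt_iff_ne_bot]
    intro hc
    exact hX.ne_zero (Ideal.span_singleton_eq_bot.mp hc)
  have h1 : q < p := by
    rw [← hpe]
    refine lt_of_le_of_ne (Ideal.span_mono (by simp)) ?_
    intro hc
    have : (MvPolynomial.X 1 : Zk k) ∈ q := by
      rw [hc]; exact Ideal.subset_span (by simp)
    rw [Ideal.mem_span_singleton, MvPolynomial.X_dvd_X] at this
    simp at this
  have h2 : (2 : ℕ∞) ≤ cHeight p := by
    refine le_sSup ⟨2, rfl, ![⊥, q, p], ?_, ?_, rfl⟩
    · rw [Fin.strictMono_iff_lt_succ]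
      intro i
      fin_cases i
      · exact h0
      · exact h1
    · intro i
      fin_cases i
      · exact Ideal.isPrime_bot
      · exact hq
      · exact hp
  rw [h] at h2
  exact absurd h2 (by decide)

end TiledC

open TensorProduct in
set_option synthInstance.maxHeartbeats 1000000 in
set_option maxHeartbeats 2000000 in
/-- The tiled order `R = (Z m; Z Z)` over `Z = k[X,Y]` is prime and noetherian with
centre isomorphic to `Z`, has finite global dimension, and satisfies
`R_p ≅ M₂(Z_p)` for every height-one prime `p` of `Z` (so it is Azumaya in height
one); yet its Azumaya locus is `Maxspec Z ∖ {m}`, a proper subset of the smooth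
locus, which is all of `Maxspec Z`. -/
theorem tiled_order_example :
    (∀ a b : TiledR k, (∀ r : TiledR k, a * r * b = 0) → a = 0 ∨ b = 0) ∧
    IsNoetherianRing (TiledR k) ∧
    Nonempty (Subring.center (TiledR k) ≃+* MvPolynomial (Fin 2) k) ∧
    HasFiniteGlobalDimension (TiledR k) ∧
    (∀ (p : Ideal (MvPolynomial (Fin 2) k)) (_ : p.IsPrime), cHeight p = 1 →
      Nonempty ((Localization.AtPrime p ⊗[MvPolynomial (Fin 2) k] TiledR k) ≃+*
        Matrix (Fin 2) (Fin 2) (Localization.AtPrime p))) ∧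
    (mXY k).IsMaximal ∧
    (∀ (n : Ideal (MvPolynomial (Fin 2) k)) (hn : n.IsMaximal),
      haveI : n.IsPrime := hn.isPrime
      (IsAzumayaAlg (Localization.AtPrime n)
          (Localization.AtPrime n ⊗[MvPolynomial (Fin 2) k] TiledR k) ↔ n ≠ mXY k)) ∧
    (∀ (n : Ideal (MvPolynomial (Fin 2) k)) (hn : n.IsMaximal),
      haveI : n.IsPrime := hn.isPrime
      HasFiniteGlobalDimension (Localization.AtPrime n)) := by
  refine ⟨(TD.tiled k).prime, (TD.tiled k).noeth, (TD.tiled k).center, part_gd, ?_, mXY_max k,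
    ?_, ?_⟩
  · intro p hp h
    obtain ⟨e⟩ := (TD.tiled k).locEquiv p (Localization.AtPrime p) (height_one p hp h)
    exact ⟨e.toRingEquiv⟩
  · intro n hn
    have : n.IsPrime := hn.isPrime
    exact (TD.tiled k).azu_iff n (Localization.AtPrime n) hn
  · intro n hn
    have : n.IsPrime := hn.isPrime
    exact part_loc n
end

section
/- Let k be a field and R the algebra of 2×2 upper triangular matrices over k, with I the ideal of matrices with zero second row. Then j^ℓ_R(R/I) = 1 while j^r_R(R/I) = 0, where j^ℓ and j^r denote the left and right homological grades min{i : Ext^i_R(M,R) ≠ 0}. In particular R is not grade symmetric. -/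
set_option synthInstance.maxHeartbeats 1000000
set_option maxHeartbeats 2000000

universe u

/-- `R` is grade symmetric: the left and right homological grades agree on every
central `R`-bimodule. -/
def GradeSymmetric (R : Type u) [Ring R] : Prop :=
  ∀ (M : Type u) [AddCommGroup M] [Module R M] [Module Rᵐᵒᵖ M]
    [SMulCommClass R Rᵐᵒᵖ M] [Module.Finite R M],
    (∀ (z : Subring.center R) (m : M), (z : R) • m = MulOpposite.op (z : R) • m) →
    homGrade R M = homGrade Rᵐᵒᵖ M

variable (k : Type u) [Field k]

/-- The algebra of 2×2 upper triangular matrices over `k`. -/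
def Tri : Subalgebra k (Matrix (Fin 2) (Fin 2) k) where
  carrier := {A | A 1 0 = 0}
  mul_mem' := by
    intro a b ha hb
    simp only [Set.mem_setOf_eq] at *
    simp [Matrix.mul_apply, Fin.sum_univ_two, ha, hb]
  add_mem' := by
    intro a b ha hb
    simp only [Set.mem_setOf_eq] at *
    simp [ha, hb]
  algebraMap_mem' := by
    intro c
    simp [Matrix.algebraMap_matrix_apply]

/-- The two-sided ideal of upper triangular matrices with zero second row. -/
def triIdeal : TwoSidedIdeal (Tri k) :=
  TwoSidedIdeal.mk' {a : Tri k | (a : Matrix (Fin 2) (Fin 2) k) 1 1 = 0}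
    (by simp)
    (by
      intro x y hx hy
      simp only [Set.mem_setOf_eq] at *
      push_cast
      simp [hx, hy])
    (by
      intro x hx
      simp only [Set.mem_setOf_eq] at *
      push_cast
      simp [hx])
    (by
      intro x y hy
      have hx' : (x : Matrix (Fin 2) (Fin 2) k) 1 0 = 0 := x.2
      simp only [Set.mem_setOf_eq] at *
      push_cast
      simp [Matrix.mul_apply, Fin.sum_univ_two, hx', hy])
    (by
      intro x y hx
      have hx' : (x : Matrix (Fin 2) (Fin 2) k) 1 0 = 0 := x.2
      simp only [Set.mem_setOf_eq] at *
      push_cast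
      simp [Matrix.mul_apply, Fin.sum_univ_two, hx', hx])


open CategoryTheory in
theorem extGroup_zero (S : Type u) [Ring S] (M N : Type u) [AddCommGroup M] [Module S M]
    [AddCommGroup N] [Module S N] :
    Subsingleton (ExtGroup S M N 0) ↔ Subsingleton (M →ₗ[S] N) := by
  letI : HasDerivedCategory (ModuleCat S) := HasDerivedCategory.standard _
  letI : HasExt (ModuleCat S) := hasExt_of_hasDerivedCategory _
  exact ((Abelian.Ext.homEquiv₀ (X := ModuleCat.of S M) (Y := ModuleCat.of S N)).trans
    (ModuleCat.homEquiv)).subsingleton_congr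

open CategoryTheory in
theorem extGroup_one (S : Type u) [Ring S] (P M N : Type u) [AddCommGroup M] [Module S M]
    [AddCommGroup N] [Module S N] [AddCommGroup P] [Module S P] (π : P →ₗ[S] M)
    (hπ : Function.Surjective π) (f : LinearMap.ker π →ₗ[S] N)
    (hf : ¬ ∃ g : P →ₗ[S] N, ∀ x : LinearMap.ker π, g x = f x) :
    ¬ Subsingleton (ExtGroup S M N 1) := by
  letI : HasDerivedCategory (ModuleCat S) := HasDerivedCategory.standard _
  letI : HasExt (ModuleCat S) := hasExt_of_hasDerivedCategory _
  intro hs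
  have hs' : Subsingleton (Abelian.Ext (ModuleCat.of S M) (ModuleCat.of S N) 1) := hs
  have hS := LinearMap.shortExact_shortComplexKer hπ
  obtain ⟨x, hx⟩ := Abelian.Ext.contravariant_sequence_exact₁ hS (ModuleCat.of S N)
    (Abelian.Ext.mk₀ (ModuleCat.ofHom f)) (n₁ := 1) rfl (hs'.elim _ _)
  obtain ⟨g, rfl⟩ := (Abelian.Ext.mk₀_bijective _ _).2 x
  rw [Abelian.Ext.mk₀_comp_mk₀] at hx
  have h2 := (Abelian.Ext.mk₀_bijective _ _).1 hx
  refine hf ⟨g.hom, fun x => ?_⟩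
  exact congrArg (fun t => t.hom x) h2

theorem homGrade_eq_one (S : Type u) [Ring S] (M : Type u) [AddCommGroup M] [Module S M]
    (h0 : Subsingleton (ExtGroup S M S 0)) (h1 : ¬ Subsingleton (ExtGroup S M S 1)) :
    homGrade S M = 1 := by
  apply le_antisymm
  · exact sInf_le ⟨1, by simp, h1⟩
  · refine le_sInf ?_
    rintro n ⟨i, rfl, hi⟩
    rcases i with _ | i
    · exact absurd h0 hi
    · exact_mod_cast Nat.succ_le_succ (Nat.zero_le i)

theorem homGrade_eq_zero (S : Type u) [Ring S] (M : Type u) [AddCommGroup M] [Module S M]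
    (h0 : ¬ Subsingleton (ExtGroup S M S 0)) :
    homGrade S M = 0 := by
  apply le_antisymm
  · exact sInf_le ⟨0, by simp, h0⟩
  · exact zero_le

theorem mem_triIdeal (x : Tri k) :
    x ∈ triIdeal k ↔ (x : Matrix (Fin 2) (Fin 2) k) 1 1 = 0 := by
  exact TwoSidedIdeal.mem_mk' {a : Tri k | (a : Matrix (Fin 2) (Fin 2) k) 1 1 = 0} _ _ _ _ _ x

/-- The upper triangular matrix with the given entries. -/
def tmk (a b c : k) : Tri k := ⟨!![a, b; 0, c], by simp [Tri]⟩

theorem tri_ext {x y : Tri k} (h0 : x.1 0 0 = y.1 0 0) (h1 : x.1 0 1 = y.1 0 1)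
    (h2 : x.1 1 1 = y.1 1 1) : x = y := by
  apply Subtype.ext
  ext i j
  have hx : x.1 1 0 = 0 := x.2
  have hy : y.1 1 0 = 0 := y.2
  fin_cases i <;> fin_cases j <;> simp_all

theorem tri_mul00 (x y : Tri k) : (x * y).1 0 0 = x.1 0 0 * y.1 0 0 := by
  have hy : y.1 1 0 = 0 := y.2
  simp [Matrix.mul_apply, Fin.sum_univ_two, hy]
theorem tri_mul01 (x y : Tri k) :
    (x * y).1 0 1 = x.1 0 0 * y.1 0 1 + x.1 0 1 * y.1 1 1 := by
  simp [Matrix.mul_apply, Fin.sum_univ_two]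
theorem tri_mul11 (x y : Tri k) : (x * y).1 1 1 = x.1 1 1 * y.1 1 1 := by
  have hx : x.1 1 0 = 0 := x.2
  simp [Matrix.mul_apply, Fin.sum_univ_two, hx]

theorem left_grade (M : Type u) [AddCommGroup M] [Module (Tri k) M] (π : Tri k →ₗ[Tri k] M)
    (hπ : Function.Surjective π) (hk : ∀ x, π x = 0 ↔ x.1 1 1 = 0) :
    homGrade (Tri k) M = 1 := by
  apply homGrade_eq_one
  · rw [extGroup_zero]
    refine subsingleton_of_forall_eq 0 fun φ => ?_
    have key : ∀ x : Tri k, x.1 1 1 = 0 → x * φ (π 1) = 0 := by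
      intro x hx
      rw [← smul_eq_mul, ← map_smul, ← map_smul, smul_eq_mul, mul_one, (hk x).2 hx, map_zero]
    have h1 : φ (π 1) = 0 := by
      have a := key (tmk k 1 0 0) (by simp [tmk])
      have b := key (tmk k 0 1 0) (by simp [tmk])
      have a0 := congrArg (fun t : Tri k => t.1 0 0) a
      have a1 := congrArg (fun t : Tri k => t.1 0 1) a
      have b1 := congrArg (fun t : Tri k => t.1 0 1) b
      simp only [tri_mul00, tri_mul01] at a0 a1 b1
      apply tri_ext
      · simpa [tmk] using a0
      · simpa [tmk] using a1
      · simpa [tmk] using b1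
    ext m
    obtain ⟨r, rfl⟩ := hπ m
    have : π r = r • π 1 := by rw [← map_smul, smul_eq_mul, mul_one]
    rw [this, map_smul, h1]
    simp
  · refine extGroup_one (Tri k) (Tri k) M (Tri k) π hπ
      { toFun := fun x => tmk k (x.1.1 0 1) 0 0
        map_add' := ?_
        map_smul' := ?_ } ?_
    · intro x y
      apply tri_ext <;> simp [tmk]
    · intro r x
      have hx : x.1.1 1 1 = 0 := (hk _).1 x.2
      apply tri_ext
      · simp only [RingHom.id_apply, smul_eq_mul, tri_mul00, Submodule.coe_smul, tri_mul01, hx]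
        simp [tmk, tri_mul01, hx]
      · simp only [RingHom.id_apply, smul_eq_mul, tri_mul01]
        simp [tmk]
      · simp only [RingHom.id_apply, smul_eq_mul, tri_mul11]
        simp [tmk]
    · rintro ⟨g, hg⟩
      have h := hg ⟨tmk k 0 1 0, (hk _).2 (by simp [tmk])⟩
      have h2 : g (tmk k 0 1 0) = tmk k 0 1 0 * g 1 := by
        rw [← smul_eq_mul, ← map_smul, smul_eq_mul, mul_one]
      have h3 := congrArg (fun t : Tri k => t.1 0 0) (h2.symm.trans h)
      simp only [tri_mul00] at h3
      simp [tmk] at h3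

theorem right_grade (M : Type u) [AddCommGroup M] [Module (Tri k)ᵐᵒᵖ M]
    (π : (Tri k)ᵐᵒᵖ →ₗ[(Tri k)ᵐᵒᵖ] M)
    (hπ : Function.Surjective π) (hk : ∀ x, π x = 0 ↔ x.unop.1 1 1 = 0) :
    homGrade (Tri k)ᵐᵒᵖ M = 0 := by
  apply homGrade_eq_zero
  rw [extGroup_zero]
  intro hs
  let e : (Tri k)ᵐᵒᵖ := MulOpposite.op (tmk k 0 0 1)
  let ψ : ((Tri k)ᵐᵒᵖ ⧸ LinearMap.ker π) →ₗ[(Tri k)ᵐᵒᵖ] (Tri k)ᵐᵒᵖ :=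
    (LinearMap.ker π).liftQ (LinearMap.toSpanSingleton _ _ e) (by
      intro x hx
      have hx := (hk x).1 hx
      rw [LinearMap.mem_ker, LinearMap.toSpanSingleton_apply, smul_eq_mul]
      apply MulOpposite.unop_injective
      rw [MulOpposite.unop_mul]
      apply tri_ext
      · rw [tri_mul00]; simp [e, tmk]
      · rw [tri_mul01, hx]; simp [e, tmk]
      · rw [tri_mul11, hx]; simp)
  let E := π.quotKerEquivOfSurjective hπ
  have h := hs.elim (ψ ∘ₗ E.symm.toLinearMap) 0
  have h2 := LinearMap.congr_fun h (E (Submodule.Quotient.mk 1))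
  have h3 : ψ (Submodule.Quotient.mk 1) = 0 := by simpa using h2
  have h4 : e = 0 := by
    have : ψ (Submodule.Quotient.mk 1) = (1 : (Tri k)ᵐᵒᵖ) • e := rfl
    rw [← h3, this, one_smul]
  have h5 := congrArg (fun t : (Tri k)ᵐᵒᵖ => t.unop.1 1 1) h4
  simp [e, tmk] at h5

/-- The character reading off the lower right entry. -/
def triChar : Tri k →+* k where
  toFun x := x.1 1 1
  map_one' := by simp
  map_mul' := tri_mul11 k
  map_zero' := by simp
  map_add' := by simp

/-- The same character on the opposite ring. -/
def triCharOp : (Tri k)ᵐᵒᵖ →+* k where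
  toFun x := x.unop.1 1 1
  map_one' := by simp
  map_mul' x y := by rw [MulOpposite.unop_mul, tri_mul11, mul_comm]
  map_zero' := by simp
  map_add' := by simp

theorem not_gradeSymmetric_aux : ¬ GradeSymmetric (Tri k) := by
  intro H
  letI i1 : Module (Tri k) k := Module.compHom k (triChar k)
  letI i2 : Module (Tri k)ᵐᵒᵖ k := Module.compHom k (triCharOp k)
  have e1 : ∀ (r : Tri k) (x : k), r • x = r.1 1 1 * x := fun _ _ => rfl
  have e2 : ∀ (r : (Tri k)ᵐᵒᵖ) (x : k), r • x = r.unop.1 1 1 * x := fun _ _ => rfl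
  haveI : SMulCommClass (Tri k) (Tri k)ᵐᵒᵖ k := ⟨fun a b c => by
    rw [e1, e2, e1, e2, mul_left_comm]⟩
  let π1 : Tri k →ₗ[Tri k] k := LinearMap.toSpanSingleton _ _ 1
  let π2 : (Tri k)ᵐᵒᵖ →ₗ[(Tri k)ᵐᵒᵖ] k := LinearMap.toSpanSingleton _ _ 1
  have f1 : ∀ x, π1 x = x.1 1 1 := fun x => mul_one _
  have f2 : ∀ x, π2 x = x.unop.1 1 1 := fun x => mul_one _
  have s1 : Function.Surjective π1 := fun c => ⟨tmk k 0 0 c, by rw [f1]; simp [tmk]⟩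
  have s2 : Function.Surjective π2 :=
    fun c => ⟨MulOpposite.op (tmk k 0 0 c), by rw [f2]; simp [tmk]⟩
  haveI : Module.Finite (Tri k) k := Module.Finite.of_surjective π1 s1
  have h := H k (fun z m => rfl)
  rw [left_grade k k π1 s1 (fun x => by rw [f1]),
    right_grade k k π2 s2 (fun x => by rw [f2])] at h
  exact one_ne_zero h

/-- Let `R` be the algebra of 2×2 upper triangular matrices over a field `k`, and `I`
the ideal of matrices with zero second row.  Then the left homological grade of `R/I`
is `1` while its right homological grade is `0`; in particular `R` is not grade
symmetric. -/
theorem triangular_not_grade_symmetric :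
    homGrade (Tri k) ((Tri k) ⧸ TwoSidedIdeal.asIdeal (triIdeal k)) = 1 ∧
    homGrade (Tri k)ᵐᵒᵖ ((Tri k)ᵐᵒᵖ ⧸ tsOpIdeal (triIdeal k)) = 0 ∧
    ¬ GradeSymmetric (Tri k) := by
  refine ⟨?_, ?_, not_gradeSymmetric_aux k⟩
  · refine left_grade k _ (Submodule.mkQ _) (Submodule.mkQ_surjective _) fun x => ?_
    rw [Submodule.mkQ_apply, Submodule.Quotient.mk_eq_zero, TwoSidedIdeal.mem_asIdeal,
      mem_triIdeal]
  · refine right_grade k _ (Submodule.mkQ _) (Submodule.mkQ_surjective _) fun x => ?_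
    rw [Submodule.mkQ_apply, Submodule.Quotient.mk_eq_zero, ← mem_triIdeal]
    rfl
end

section
/- Let R be a noetherian ring which is a finite module over its center Z(R), and suppose that for every prime ideal P of R one has Kdim(R) = Kdim(R/P) + j_R(R/P), where j_R denotes the (left and right) homological grade. Then for every nonzero finitely generated left or right R-module M, Kdim(R) = Kdim(M) + j_R(M); that is, R is Krull-Macaulay. -/
universe u

open Filter in
/-- `DevLE n a b` : the deviation (in the sense of Gabriel–Rentschler) of the
interval `[a, b]` in a poset is at most `n`. -/
def DevLE {α : Type*} [Preorder α] : ℕ → α → α → Prop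
  | 0, a, b => ∀ f : ℕ → α, Antitone f → (∀ i, a ≤ f i) → f 0 ≤ b →
      ∀ᶠ i in atTop, f (i + 1) = f i
  | n + 1, a, b => ∀ f : ℕ → α, Antitone f → (∀ i, a ≤ f i) → f 0 ≤ b →
      ∀ᶠ i in atTop, DevLE n (f (i + 1)) (f i)

/-- The Krull dimension (Gabriel–Rentschler deviation of the submodule lattice)
of a module, valued in `ℕ∞`. -/
noncomputable def moduleKdim (R M : Type*) [Ring R] [AddCommGroup M] [Module R M] : ℕ∞ :=
  sInf {n : ℕ∞ | ∃ m : ℕ, n = m ∧ DevLE m (⊥ : Submodule R M) ⊤}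


open Filter in
theorem devLE_mono {α : Type*} [Preorder α] {n : ℕ} {a b a' b' : α} (h : DevLE n a b)
    (ha : a ≤ a') (hb : b' ≤ b) : DevLE n a' b' := by
  cases n with
  | zero => exact fun f hf h1 h2 => h f hf (fun i => ha.trans (h1 i)) (h2.trans hb)
  | succ n => exact fun f hf h1 h2 => h f hf (fun i => ha.trans (h1 i)) (h2.trans hb)

theorem devLE_transfer {α β : Type*} [PartialOrder α] [PartialOrder β] (φ : α → β) {n : ℕ} :
    ∀ {a b : α}, (∀ x y, a ≤ x → x ≤ y → y ≤ b → φ x ≤ φ y) →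
    (∀ x y, a ≤ x → x ≤ y → y ≤ b → φ x = φ y → x = y) →
    DevLE n (φ a) (φ b) → DevLE n a b := by
  -- chains outside the interval are excluded by hypothesis
  induction n with
  | zero =>
    intro a b hm hi h f hf h1 h2
    have hb : ∀ i, f i ≤ b := fun i => (hf (Nat.zero_le i)).trans h2
    have := h (fun i => φ (f i)) (fun i j hij => hm _ _ (h1 _) (hf hij) (hb _))
      (fun i => hm _ _ le_rfl (h1 i) (hb i)) (hm _ _ (h1 0) h2 le_rfl)
    filter_upwards [this] with i hi'
    exact hi _ _ (h1 _) (hf (Nat.le_succ i)) (hb _) hi'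
  | succ n ih =>
    intro a b hm hi h f hf h1 h2
    have hb : ∀ i, f i ≤ b := fun i => (hf (Nat.zero_le i)).trans h2
    have := h (fun i => φ (f i)) (fun i j hij => hm _ _ (h1 _) (hf hij) (hb _))
      (fun i => hm _ _ le_rfl (h1 i) (hb i)) (hm _ _ (h1 0) h2 le_rfl)
    filter_upwards [this] with i hi'
    exact ih (fun x y hx hxy hy => hm x y ((h1 _).trans hx) hxy (hy.trans (hb _)))
      (fun x y hx hxy hy => hi x y ((h1 _).trans hx) hxy (hy.trans (hb _))) hi'

theorem devLE_ext {α : Type*} [Lattice α] [IsModularLattice α] {n : ℕ} :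
    ∀ {a b c : α}, a ≤ b → b ≤ c → DevLE n a b → DevLE n b c → DevLE n a c := by
  induction n with
  | zero =>
    intro a b c hab hbc h1 h2 f hf ha hc
    have e1 := h1 (fun i => f i ⊓ b) (fun i j hij => inf_le_inf_right _ (hf hij))
      (fun i => le_inf (ha i) hab) inf_le_right
    have e2 := h2 (fun i => f i ⊔ b) (fun i j hij => sup_le_sup_right (hf hij) _)
      (fun i => le_sup_right) (sup_le hc hbc)
    filter_upwards [e1, e2] with i h1 h2
    exact eq_of_le_of_inf_le_of_sup_le (hf (Nat.le_succ i)) h1.ge h2.ge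
  | succ n ih =>
    intro a b c hab hbc h1 h2 f hf ha hc
    have e1 := h1 (fun i => f i ⊓ b) (fun i j hij => inf_le_inf_right _ (hf hij))
      (fun i => le_inf (ha i) hab) inf_le_right
    have e2 := h2 (fun i => f i ⊔ b) (fun i j hij => sup_le_sup_right (hf hij) _)
      (fun i => le_sup_right) (sup_le hc hbc)
    filter_upwards [e1, e2] with i h1 h2
    have hle : f (i+1) ≤ f i := hf (Nat.le_succ i)
    refine ih (b := f (i+1) ⊔ (f i ⊓ b)) le_sup_left (sup_le hle inf_le_left) ?_ ?_
    · refine devLE_transfer (fun x => x ⊓ b) (fun x y _ hxy _ => inf_le_inf_right _ hxy) ?_ ?_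
      · intro x y hx hxy hy h
        refine eq_of_le_of_inf_le_of_sup_le (z := b) hxy h.ge ?_
        calc y ⊔ b ≤ (f (i+1) ⊔ (f i ⊓ b)) ⊔ b := sup_le_sup_right hy _
          _ ≤ x ⊔ b := sup_le (sup_le (hx.trans le_sup_left) (inf_le_right.trans le_sup_right)) le_sup_right
      · exact devLE_mono h1 le_rfl (le_inf (inf_le_left.trans (sup_le hle inf_le_left)) inf_le_right)
    · refine devLE_transfer (fun x => x ⊔ b) (fun x y _ hxy _ => sup_le_sup_right hxy _) ?_ ?_
      · intro x y hx hxy hy h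
        refine eq_of_le_of_inf_le_of_sup_le (z := b) hxy ?_ h.ge
        exact le_inf ((inf_le_inf_right _ hy).trans (le_sup_right.trans hx)) inf_le_right
      · exact devLE_mono h2 (sup_le_sup_right le_sup_left _) le_rfl

theorem devLE_self {α : Type*} [PartialOrder α] {n : ℕ} (a : α) : DevLE n a a := by
  induction n with
  | zero =>
    intro f hf h1 h2
    have : ∀ i, f i = a := fun i => le_antisymm ((hf (Nat.zero_le i)).trans h2) (h1 i)
    simp [this]
  | succ n ih =>
    intro f hf h1 h2
    have : ∀ i, f i = a := fun i => le_antisymm ((hf (Nat.zero_le i)).trans h2) (h1 i)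
    simp [this, ih]

/-- module version -/
def MDev (n : ℕ) (R M : Type*) [Ring R] [AddCommGroup M] [Module R M] : Prop :=
  DevLE n (⊥ : Submodule R M) ⊤

section
variable {R M N : Type*} [Ring R] [AddCommGroup M] [Module R M] [AddCommGroup N] [Module R N]

theorem MDev.of_inj {n : ℕ} (f : M →ₗ[R] N) (hf : Function.Injective f) (h : MDev n R N) :
    MDev n R M :=
  devLE_transfer (fun L => L.map f) (fun _ _ _ hxy _ => Submodule.map_mono hxy)
    (fun _ _ _ _ _ h => Submodule.map_injective_of_injective hf h) (devLE_mono h bot_le le_top)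

theorem MDev.of_surj {n : ℕ} (f : N →ₗ[R] M) (hf : Function.Surjective f) (h : MDev n R N) :
    MDev n R M :=
  devLE_transfer (fun L => L.comap f) (fun _ _ _ hxy _ => Submodule.comap_mono hxy)
    (fun _ _ _ _ _ h => Submodule.comap_injective_of_surjective hf h) (devLE_mono h bot_le le_top)

theorem MDev.quot_iff {n : ℕ} (L : Submodule R M) (h : MDev n R (M ⧸ L)) :
    DevLE n L ⊤ := by
  refine devLE_transfer (fun X => X.map L.mkQ) (fun _ _ _ hxy _ => Submodule.map_mono hxy)
    (fun x y hx hxy _ h => ?_) (devLE_mono h bot_le le_top)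
  have := congrArg (Submodule.comap L.mkQ) h
  simpa [Submodule.comap_map_mkQ, sup_eq_right.2 hx, sup_eq_right.2 (hx.trans hxy)] using this

theorem MDev.of_exact {n : ℕ} {P : Type*} [AddCommGroup P] [Module R P]
    (f : M →ₗ[R] N) (g : N →ₗ[R] P) (hg : Function.Exact f g)
    (h1 : MDev n R M) (h2 : MDev n R P) :
    MDev n R N := by
  refine devLE_ext (b := LinearMap.range f) bot_le le_top ?_ ?_
  · refine devLE_transfer (fun X => X.comap f) (fun _ _ _ hxy _ => Submodule.comap_mono hxy)
      (fun x y hx hxy hy h => ?_) (devLE_mono h1 bot_le le_top)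
    have := congrArg (Submodule.map f) h
    simpa [Submodule.map_comap_eq, inf_eq_right.2 hy, inf_eq_right.2 (hxy.trans hy)] using this
  · have := (LinearMap.exact_iff.1 hg)
    refine devLE_transfer (fun X => X.map g) (fun _ _ _ hxy _ => Submodule.map_mono hxy)
      (fun x y hx hxy hy h => ?_) (devLE_mono h2 bot_le le_top)
    have h' := congrArg (Submodule.comap g) h
    simp only [Submodule.comap_map_eq, this] at h'
    rwa [sup_eq_left.2 hx, sup_eq_left.2 (hx.trans hxy)] at h'

theorem MDev.zero_surj (f : M →ₗ[R] M) (hf : Function.Injective f) (h : MDev 0 R M) :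
    Function.Surjective f := by
  have := h (fun i => LinearMap.range (f ^ i)) (antitone_nat_of_succ_le fun i => by
    rw [pow_succ]; exact LinearMap.range_comp_le_range _ _) (fun _ => bot_le) le_top
  obtain ⟨i, hi⟩ := this.exists
  have hfi : Function.Injective (f ^ i) := by
    rw [Module.End.coe_pow]; exact hf.iterate i
  intro y
  have : (f ^ i) y ∈ LinearMap.range (f ^ (i+1)) := by
    rw [hi]; exact ⟨y, rfl⟩
  obtain ⟨x, hx⟩ := this
  exact ⟨x, hfi (by rw [← hx, pow_succ]; rfl)⟩

theorem MDev.succ_quot {n : ℕ} (f : M →ₗ[R] M) (hf : Function.Injective f) (h : MDev (n+1) R M) :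
    MDev n R (M ⧸ LinearMap.range f) := by
  have := h (fun i => LinearMap.range (f ^ i)) (antitone_nat_of_succ_le fun i => by
    rw [pow_succ]; exact LinearMap.range_comp_le_range _ _) (fun _ => bot_le) le_top
  obtain ⟨i, hi⟩ := this.exists
  have hfi : Function.Injective (f ^ i) := by
    rw [Module.End.coe_pow]; exact hf.iterate i
  refine devLE_transfer (fun X => (X.comap (LinearMap.range f).mkQ).map (f ^ i))
    (fun _ _ _ hxy _ => Submodule.map_mono (Submodule.comap_mono hxy))
    (fun _ _ _ _ _ h => Submodule.comap_injective_of_surjective (Submodule.mkQ_surjective _)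
       (Submodule.map_injective_of_injective hfi h)) (devLE_mono hi ?_ ?_)
  · rw [Submodule.comap_bot, Submodule.ker_mkQ, pow_succ]
    rintro _ ⟨x, rfl⟩
    exact ⟨f x, ⟨x, rfl⟩, rfl⟩
  · rw [Submodule.comap_top, Submodule.map_top]

theorem MDev.restrict {A : Type*} [Ring A] [Module A M] [SMul A R] [IsScalarTower A R M] {n : ℕ}
    (h : MDev n A M) : MDev n R M :=
  devLE_transfer (fun X => X.restrictScalars A) (fun _ _ _ hxy _ => hxy)
    (fun _ _ _ _ _ h => Submodule.restrictScalars_injective _ _ _ h) (devLE_mono h bot_le le_top)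
end

section upper
variable {A : Type u} [CommRing A] [IsNoetherianRing A]

theorem supp_quot_prime_lt (p : PrimeSpectrum A) (f : Submodule A (A ⧸ p.asIdeal)) (hf : f ≠ ⊥)
    (q : PrimeSpectrum A) (hq : q ∈ Module.support A ((A ⧸ p.asIdeal) ⧸ f)) : p < q := by
  have h1 : q ∈ Module.support A (A ⧸ p.asIdeal) :=
    Module.support_subset_of_surjective _ f.mkQ_surjective hq
  rw [Module.mem_support_iff_of_finite] at hq h1
  rw [Ideal.annihilator_quotient] at h1
  refine lt_of_le_of_ne h1 ?_
  rintro rfl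
  apply hf
  rw [eq_bot_iff]
  intro x hx
  obtain ⟨a, rfl⟩ := Ideal.Quotient.mk_surjective x
  have : a ∈ p.asIdeal := by
    apply hq
    rw [Module.mem_annihilator]
    intro m
    obtain ⟨m, rfl⟩ := f.mkQ_surjective m
    obtain ⟨b, rfl⟩ := Ideal.Quotient.mk_surjective m
    rw [← map_smul, Submodule.mkQ_apply, Submodule.Quotient.mk_eq_zero]
    have h2 := f.smul_mem b hx
    rw [Algebra.smul_def, mul_comm] at h2
    rw [Algebra.smul_def]
    exact h2
  rw [Submodule.mem_bot]
  exact Ideal.Quotient.eq_zero_iff_mem.2 this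

theorem mdev_upper (n : ℕ) : ∀ (M : Type u) [AddCommGroup M] [Module A M] [Module.Finite A M],
    (∀ p ∈ Module.support A M, Order.coheight p ≤ n) → MDev n A M := by
  induction n with
  | zero =>
    intro M _ _ hM
    induction hM using IsNoetherianRing.induction_on_isQuotientEquivQuotientPrime A with
    | subsingleton N =>
      intro _
      have : (⊥ : Submodule A N) = ⊤ := Subsingleton.elim _ _
      rw [MDev, this]; exact devLE_self _
    | quotient N p e =>
      intro h
      refine MDev.of_inj e.toLinearMap e.injective ?_
      have hp : Order.coheight p ≤ 0 := h p (by
        rw [e.support_eq, Module.mem_support_iff_of_finite, Ideal.annihilator_quotient])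
      have hmax : IsMax p := by simpa using hp
      intro f hf _ _
      by_cases hb : ∃ i, f i = ⊥
      · obtain ⟨i, hi⟩ := hb
        filter_upwards [Filter.eventually_ge_atTop i] with j hj
        have h1 : f j = ⊥ := eq_bot_iff.2 (hi ▸ hf hj)
        have h2 : f (j+1) = ⊥ := eq_bot_iff.2 (hi ▸ hf (by omega))
        rw [h1, h2]
      · push Not at hb
        have : ∀ i, f i = ⊤ := by
          intro i
          have : Module.support A ((A ⧸ p.asIdeal) ⧸ f i) = ∅ := by
            rw [Set.eq_empty_iff_forall_notMem]
            intro q hq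
            exact hmax.not_lt (supp_quot_prime_lt p _ (hb i) q hq)
          rw [Module.support_eq_empty_iff] at this
          exact Submodule.Quotient.subsingleton_iff.1 this
        simp [this]
    | exact N₁ N₂ N₃ f g hf hg hfg h1 h3 =>
      intro h
      rw [Module.support_of_exact hfg hf hg] at h
      exact MDev.of_exact f g hfg (h1 fun p hp => h p (Or.inl hp)) (h3 fun p hp => h p (Or.inr hp))
  | succ n ih =>
    intro M _ _ hM
    induction hM using IsNoetherianRing.induction_on_isQuotientEquivQuotientPrime A with
    | subsingleton N =>
      intro _
      have : (⊥ : Submodule A N) = ⊤ := Subsingleton.elim _ _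
      rw [MDev, this]; exact devLE_self _
    | quotient N p e =>
      intro h
      have hp : Order.coheight p ≤ (n + 1 : ℕ) := h p (by
        rw [e.support_eq, Module.mem_support_iff_of_finite, Ideal.annihilator_quotient])
      refine MDev.of_inj (N := A ⧸ p.asIdeal) e.toLinearMap e.injective ?_
      intro f hf _ _
      by_cases hb : ∃ i, f i = ⊥
      · obtain ⟨i, hi⟩ := hb
        filter_upwards [Filter.eventually_ge_atTop i] with j hj
        have h1 : f j = ⊥ := eq_bot_iff.2 (hi ▸ hf hj)
        have h2 : f (j+1) = ⊥ := eq_bot_iff.2 (hi ▸ hf (by omega))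
        rw [h1, h2]
        exact devLE_self _
      · push Not at hb
        refine Filter.Eventually.of_forall fun i => ?_
        refine devLE_mono (b := ⊤) (MDev.quot_iff (f (i+1)) ?_) le_rfl le_top
        apply ih
        intro q hq
        have := Order.coheight_add_one_le (supp_quot_prime_lt p _ (hb _) q hq)
        have := this.trans hp
        rw [Nat.cast_succ] at this
        exact (ENat.add_le_add_iff_right ENat.one_ne_top).1 this
    | exact N₁ N₂ N₃ f g hf hg hfg h1 h3 =>
      intro h
      rw [Module.support_of_exact hfg hf hg] at h
      exact MDev.of_exact f g hfg (h1 fun p hp => h p (Or.inl hp)) (h3 fun p hp => h p (Or.inr hp))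
end upper

set_option linter.unusedSectionVars false
section crit
variable {A S : Type u} [CommRing A] [IsNoetherianRing A] [Ring S] [Algebra A S]

theorem finite_sub {M : Type u} [AddCommGroup M] [Module A M] [Module S M] [IsScalarTower A S M]
    [Module.Finite A M] (N : Submodule S M) : Module.Finite A N := by
  have : IsNoetherian A M := inferInstance
  exact Module.Finite.of_injective (N.subtype.restrictScalars A) N.injective_subtype

theorem noeth_S {M : Type u} [AddCommGroup M] [Module A M] [Module S M] [IsScalarTower A S M]
    [Module.Finite A M] : IsNoetherian S M :=
  isNoetherian_of_tower A inferInstance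

theorem supp_quot_le {M : Type u} [AddCommGroup M] [Module A M] [Module S M] [IsScalarTower A S M]
    (N : Submodule S M) : Module.support A (M ⧸ N) ⊆ Module.support A M :=
  Module.support_subset_of_surjective (N.mkQ.restrictScalars A) N.mkQ_surjective

theorem supp_sub_le {M : Type u} [AddCommGroup M] [Module A M] [Module S M] [IsScalarTower A S M]
    (N : Submodule S M) : Module.support A N ⊆ Module.support A M :=
  Module.support_subset_of_injective (N.subtype.restrictScalars A) N.injective_subtype

theorem supp_union {M : Type u} [AddCommGroup M] [Module A M] [Module S M] [IsScalarTower A S M]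
    (N : Submodule S M) : Module.support A M = Module.support A N ∪ Module.support A (M ⧸ N) :=
  Module.support_of_exact (f := N.subtype.restrictScalars A) (g := N.mkQ.restrictScalars A)
    (LinearMap.exact_subtype_mkQ N) N.injective_subtype N.mkQ_surjective

theorem nak {M : Type u} [AddCommGroup M] [Module A M] [Module S M] [IsScalarTower A S M]
    [Module.Finite A M] (a : A) (q : PrimeSpectrum A) (hq : q ∈ Module.support A M)
    (ha : a ∈ q.asIdeal) :
    q ∈ Module.support A (M ⧸ LinearMap.range (DistribSMul.toLinearMap S M a)) := by
  have e := Submodule.Quotient.restrictScalarsEquiv A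
    (LinearMap.range (DistribSMul.toLinearMap S M a))
  rw [← e.support_eq]
  have : (Submodule.restrictScalars A (LinearMap.range (DistribSMul.toLinearMap S M a))) =
    Ideal.span {a} • (⊤ : Submodule A M) := by
    ext x
    rw [Submodule.ideal_span_singleton_smul, Submodule.mem_smul_pointwise_iff_exists]
    simp
  rw [this, Module.support_quotient]
  refine ⟨hq, ?_⟩
  rw [PrimeSpectrum.zeroLocus_span]
  simpa using ha

variable (S) in
def Crit (p : PrimeSpectrum A) (C : Type u) [AddCommGroup C] [Module A C] [Module S C]
    [IsScalarTower A S C] : Prop :=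
  p ∈ Module.support A C ∧ ∀ N : Submodule S C, N ≠ ⊥ → p ∉ Module.support A (C ⧸ N)

variable (S) in
theorem exists_crit (M : Type u) [AddCommGroup M] [Module A M] [Module S M] [IsScalarTower A S M]
    [Module.Finite A M] (p : PrimeSpectrum A) (hp : p ∈ Module.support A M) :
    ∃ K : Submodule S M, Crit S p (M ⧸ K) := by
  have : IsNoetherian S M := noeth_S (A := A)
  have hne : {K : Submodule S M | p ∈ Module.support A (M ⧸ K)}.Nonempty :=
    ⟨⊥, by
      refine Module.support_subset_of_injective
        ((⊥ : Submodule S M).mkQ.restrictScalars A) ?_ hp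
      intro x y h
      exact sub_eq_zero.1 ((Submodule.Quotient.eq _).1 h)⟩
  obtain ⟨K, hK, hmax⟩ := (wellFounded_gt (α := Submodule S M)).has_min _ hne
  refine ⟨K, hK, fun N hN hpN => ?_⟩
  refine hmax (N.comap K.mkQ) ?_ ?_
  · refine Module.support_subset_of_surjective
      (((N.comap K.mkQ).liftQ (N.mkQ ∘ₗ K.mkQ) ?_).restrictScalars A) ?_ hpN
    · intro x hx
      simpa using hx
    · intro y
      obtain ⟨y, rfl⟩ := N.mkQ_surjective y
      obtain ⟨y, rfl⟩ := K.mkQ_surjective y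
      exact ⟨(N.comap K.mkQ).mkQ y, rfl⟩
  · refine lt_of_le_of_ne (Submodule.le_comap_mkQ K N) ?_
    intro h
    apply hN
    rw [← Submodule.map_comap_eq_of_surjective K.mkQ_surjective N, ← h, Submodule.mkQ_map_self]

variable {C : Type u} [AddCommGroup C] [Module A C] [Module S C]
    [IsScalarTower A S C] [Module.Finite A C] {p : PrimeSpectrum A}

theorem Crit.smul_zero (h : Crit S p C) {a : A} (ha : a ∈ p.asIdeal) (c : C) : a • c = 0 := by
  by_contra hc
  refine h.2 (LinearMap.range (DistribSMul.toLinearMap S C a)) ?_ (nak a p h.1 ha)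
  intro hb
  apply hc
  have : a • c ∈ LinearMap.range (DistribSMul.toLinearMap S C a) := ⟨c, rfl⟩
  rw [hb] at this
  exact this

theorem Crit.smul_inj (h : Crit S p C) {a : A} (ha : a ∉ p.asIdeal) (c : C) (hc : a • c = 0) :
    c = 0 := by
  by_contra hc0
  set N := LinearMap.ker (DistribSMul.toLinearMap S C a)
  have h1 := h.2 N (fun hb => hc0 (by
    have : c ∈ N := hc
    rw [hb] at this; exact this))
  have h2 := h.1
  rw [supp_union N] at h2
  have h3 := h2.resolve_right h1
  have := Module.annihilator_le_of_mem_support h3 (x := a) (by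
    rw [Module.mem_annihilator]
    rintro ⟨m, hm⟩
    exact Subtype.ext hm)
  exact ha this

theorem Crit.ann (h : Crit S p C) : Module.annihilator A C = p.asIdeal :=
  le_antisymm (Module.annihilator_le_of_mem_support h.1)
    fun _ ha => Module.mem_annihilator.2 fun c => h.smul_zero ha c

theorem mdev_lower (n : ℕ) : ∀ (M : Type u) [AddCommGroup M] [Module A M] [Module S M]
    [IsScalarTower A S M] [Module.Finite A M] (p : PrimeSpectrum A), p ∈ Module.support A M →
    MDev n S M → Order.coheight p ≤ n := by
  induction n with
  | zero =>
    intro M _ _ _ _ _ p hp hM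
    by_contra hlt
    obtain ⟨K, hK⟩ := exists_crit S M p hp
    have hD := MDev.of_surj K.mkQ K.mkQ_surjective hM
    rw [Order.coheight_le_coe_iff] at hlt
    push Not at hlt
    obtain ⟨q, hpq, -⟩ := hlt
    obtain ⟨a, haq, hap⟩ := SetLike.exists_of_lt (show p.asIdeal < q.asIdeal from hpq)
    have hinj : Function.Injective (DistribSMul.toLinearMap S (M ⧸ K) a) := by
      rw [← LinearMap.ker_eq_bot, LinearMap.ker_eq_bot']
      exact fun m hm => hK.smul_inj hap m hm
    have h1 := nak (S := S) a q (Module.mem_support_mono hpq.le hK.1) haq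
    rw [LinearMap.range_eq_top.2 (hD.zero_surj _ hinj)] at h1
    have : Subsingleton ((M ⧸ K) ⧸ (⊤ : Submodule S (M ⧸ K))) := by simp
    rw [Module.support_eq_empty] at h1
    exact h1
  | succ n ih =>
    intro M _ _ _ _ _ p hp hM
    by_contra hlt
    obtain ⟨K, hK⟩ := exists_crit S M p hp
    have hD := MDev.of_surj K.mkQ K.mkQ_surjective hM
    rw [Order.coheight_le_coe_iff] at hlt
    push Not at hlt
    obtain ⟨q, hpq, hq⟩ := hlt
    obtain ⟨a, haq, hap⟩ := SetLike.exists_of_lt (show p.asIdeal < q.asIdeal from hpq)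
    have hinj : Function.Injective (DistribSMul.toLinearMap S (M ⧸ K) a) := by
      rw [← LinearMap.ker_eq_bot, LinearMap.ker_eq_bot']
      exact fun m hm => hK.smul_inj hap m hm
    have h1 := nak (S := S) a q (Module.mem_support_mono hpq.le hK.1) haq
    have := hq.trans (ih _ q h1 (hD.succ_quot _ hinj))
    norm_cast at this
    omega

theorem kdim_le_iff (M : Type u) [AddCommGroup M] [Module A M] [Module S M]
    [IsScalarTower A S M] [Module.Finite A M] (n : ℕ) :
    moduleKdim S M ≤ n ↔ ∀ p ∈ Module.support A M, Order.coheight p ≤ n := by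
  constructor
  · intro h p hp
    have hne : {n : ℕ∞ | ∃ m : ℕ, n = m ∧ DevLE m (⊥ : Submodule S M) ⊤}.Nonempty := by
      by_contra hne
      rw [Set.not_nonempty_iff_eq_empty] at hne
      rw [moduleKdim, hne, sInf_empty] at h
      exact absurd h (by simp)
    obtain ⟨m, hm, hD⟩ := csInf_mem hne
    refine (mdev_lower (S := S) m M p hp hD).trans ?_
    rw [← hm]; exact h
  · intro h
    exact sInf_le ⟨n, rfl, MDev.restrict (mdev_upper n M h)⟩

theorem coheight_le_kdim (M : Type u) [AddCommGroup M] [Module A M] [Module S M]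
    [IsScalarTower A S M] [Module.Finite A M] (p : PrimeSpectrum A) (hp : p ∈ Module.support A M) :
    Order.coheight p ≤ moduleKdim S M := by
  cases hk : moduleKdim S M with
  | top => simp
  | coe n => exact (kdim_le_iff (A := A) M n).1 hk.le p hp
end crit

section ext
open CategoryTheory Abelian

/-- vanishing of Ext -/
def EV (S : Type u) [Ring S] (i : ℕ) (M : Type u) [AddCommGroup M] [Module S M] : Prop :=
  Subsingleton (ExtGroup S M S i)

variable {S : Type u} [Ring S] {M N Q : Type u} [AddCommGroup M] [Module S M]
  [AddCommGroup N] [Module S N] [AddCommGroup Q] [Module S Q]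

theorem se_of (f : N →ₗ[S] M) (g : M →ₗ[S] Q) (hf : Function.Injective f)
    (hg : Function.Surjective g) (hfg : Function.Exact f g) :
    (ShortComplex.mk (ModuleCat.ofHom f) (ModuleCat.ofHom g)
      (by ext x; exact hfg.apply_apply_eq_zero x)).ShortExact :=
  ModuleCat.shortComplex_shortExact _ hfg hf hg

theorem EV.zero {i : ℕ} [Subsingleton M] : EV S i M := by
  unfold EV ExtGroup
  letI : HasDerivedCategory (ModuleCat S) := HasDerivedCategory.standard _
  letI : HasExt (ModuleCat S) := hasExt_of_hasDerivedCategory _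
  refine subsingleton_of_forall_eq (0 : Ext _ _ i) fun x => ?_
  have : 𝟙 (ModuleCat.of S M) = 0 := by ext x; exact Subsingleton.elim (α := M) _ _
  rw [← Ext.mk₀_id_comp x, this, Ext.mk₀_zero, Ext.zero_comp]

theorem EV.ext {i : ℕ} (f : N →ₗ[S] M) (g : M →ₗ[S] Q) (hf : Function.Injective f)
    (hg : Function.Surjective g) (hfg : Function.Exact f g) (h1 : EV S i N) (h2 : EV S i Q) :
    EV S i M := by
  unfold EV ExtGroup at *
  letI : HasDerivedCategory (ModuleCat S) := HasDerivedCategory.standard _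
  letI : HasExt (ModuleCat S) := hasExt_of_hasDerivedCategory _
  refine subsingleton_of_forall_eq (0 : Ext _ _ i) fun x => ?_
  obtain ⟨y, rfl⟩ := Ext.contravariant_sequence_exact₂ (se_of f g hf hg hfg) _ x
    (h1.elim _ _)
  rw [h2.elim y (0 : Ext _ _ i), Ext.comp_zero]

theorem EV.quot_zero (g : M →ₗ[S] Q)
    (hg : Function.Surjective g) (h1 : EV S 0 M) : EV S 0 Q := by
  unfold EV ExtGroup at *
  letI : HasDerivedCategory (ModuleCat S) := HasDerivedCategory.standard _
  letI : HasExt (ModuleCat S) := hasExt_of_hasDerivedCategory _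
  have : Epi (ModuleCat.ofHom g) := (ModuleCat.epi_iff_surjective _).2 hg
  exact (Ext.precomp_mk₀_injective_of_epi (ModuleCat.of S S) (ModuleCat.ofHom g)).subsingleton

theorem EV.quot_succ {i : ℕ} (f : N →ₗ[S] M) (g : M →ₗ[S] Q) (hf : Function.Injective f)
    (hg : Function.Surjective g) (hfg : Function.Exact f g) (h1 : EV S (i+1) M) (h2 : EV S i N) :
    EV S (i+1) Q := by
  unfold EV ExtGroup at *
  letI : HasDerivedCategory (ModuleCat S) := HasDerivedCategory.standard _
  letI : HasExt (ModuleCat S) := hasExt_of_hasDerivedCategory _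
  refine subsingleton_of_forall_eq (0 : Ext _ _ (i+1)) fun x => ?_
  obtain ⟨y, rfl⟩ := Ext.contravariant_sequence_exact₃ (se_of f g hf hg hfg) _ x
    (h1.elim _ _) (add_comm 1 i)
  rw [h2.elim y (0 : Ext _ _ i), Ext.comp_zero]

theorem EV.quot {i : ℕ} (g : M →ₗ[S] Q) (hg : Function.Surjective g) (h1 : EV S i M)
    (h2 : ∀ j < i, EV S j (LinearMap.ker g)) : EV S i Q := by
  cases i with
  | zero => exact h1.quot_zero g hg
  | succ i =>
    exact EV.quot_succ (LinearMap.ker g).subtype g (Submodule.injective_subtype _) hg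
      (LinearMap.exact_subtype_ker_map g) h1 (h2 i (Nat.lt_succ_self i))

theorem EV.sub {i : ℕ} (L : Submodule S M) (h1 : EV S i L) (h2 : EV S i (M ⧸ L)) : EV S i M :=
  EV.ext L.subtype L.mkQ L.injective_subtype L.mkQ_surjective (LinearMap.exact_subtype_mkQ L) h1 h2

theorem EV.equiv {i : ℕ} (e : N ≃ₗ[S] M) (h1 : EV S i N) : EV S i M :=
  EV.ext (Q := PUnit.{u+1}) e.toLinearMap 0 e.injective (fun x => ⟨0, rfl⟩)
    (fun x => ⟨fun _ => e.surjective x, fun _ => rfl⟩) h1 EV.zero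

theorem EV.pi {i : ℕ} (h : EV S i M) (r : ℕ) : EV S i (Fin r → M) := by
  induction r with
  | zero => exact EV.zero
  | succ r ih =>
    refine EV.equiv (Fin.consLinearEquiv S (fun _ => M)) ?_
    exact EV.ext (LinearMap.inl S M (Fin r → M)) (LinearMap.snd S M _)
      LinearMap.inl_injective LinearMap.snd_surjective Function.Exact.inl_snd h ih

theorem le_homGrade {n : ℕ∞} : n ≤ homGrade S M ↔ ∀ i : ℕ, (i : ℕ∞) < n → EV S i M := by
  constructor
  · intro h i hi
    by_contra hc
    exact absurd (h.trans (sInf_le ⟨i, rfl, hc⟩)) (not_le.2 hi)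
  · intro h
    refine le_sInf ?_
    rintro _ ⟨i, rfl, hi⟩
    by_contra hc
    exact hi (h i (not_le.1 hc))

theorem homGrade_le {i : ℕ} (h : ¬ EV S i M) : homGrade S M ≤ i := sInf_le ⟨i, rfl, h⟩

theorem not_EV_of_homGrade {i : ℕ} (h : homGrade S M = i) : ¬ EV S i M := by
  intro hE
  have : ((i + 1 : ℕ) : ℕ∞) ≤ homGrade S M := le_homGrade.2 fun j hj => by
    rcases Nat.lt_succ_iff_lt_or_eq.1 (Nat.cast_lt.1 hj) with h1 | rfl
    · exact le_homGrade.1 h.ge j (Nat.cast_lt.2 h1)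
    · exact hE
  rw [h] at this
  exact absurd (Nat.cast_le.1 this) (by omega)
end ext

set_option linter.unusedSectionVars false
section main

/-- two-sided prime ideals as left ideals -/
def IsPrimeL {S : Type u} [Ring S] (P : Ideal S) : Prop :=
  P ≠ ⊤ ∧ (∀ x ∈ P, ∀ r, x * r ∈ P) ∧ ∀ a b : S, (∀ r, a * r * b ∈ P) → a ∈ P ∨ b ∈ P

theorem ann_twosided {S : Type u} [Ring S] (M : Type u) [AddCommGroup M] [Module S M] :
    ∀ x ∈ Module.annihilator S M, ∀ r, x * r ∈ Module.annihilator S M := by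
  intro x hx r
  rw [Module.mem_annihilator] at *
  intro m
  rw [mul_smul, hx]

theorem exists_prime_sub {S : Type u} [Ring S] [IsNoetherianRing S]
    (M : Type u) [AddCommGroup M] [Module S M] [Nontrivial M] :
    ∃ N : Submodule S M, N ≠ ⊥ ∧ IsPrimeL (Module.annihilator S N) := by
  have hne : {I : Ideal S | ∃ N : Submodule S M, N ≠ ⊥ ∧ Module.annihilator S N = I}.Nonempty :=
    ⟨_, ⊤, top_ne_bot, rfl⟩
  obtain ⟨I, ⟨N, hN, rfl⟩, hmax⟩ := (wellFounded_gt (α := Ideal S)).has_min _ hne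
  refine ⟨N, hN, ?_, ann_twosided _, ?_⟩
  · intro h
    exact hN (Submodule.annihilator_eq_top_iff.1 h)
  · intro a b hab
    by_contra hc
    push Not at hc
    obtain ⟨ha, hb⟩ := hc
    set L : Submodule S M := Submodule.span S ((fun n => b • n) '' (N : Set M))
    have hLN : L ≤ N := by
      rw [Submodule.span_le]
      rintro _ ⟨n, hn, rfl⟩
      exact N.smul_mem b hn
    have hL : L ≠ ⊥ := by
      intro h
      apply hb
      refine Submodule.mem_annihilator.2 fun n hn => ?_
      have : b • n ∈ L := Submodule.subset_span ⟨n, hn, rfl⟩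
      rw [h] at this
      exact this
    have haL : a ∈ Module.annihilator S L := by
      refine Submodule.mem_annihilator.2 fun n hn => ?_
      suffices ∀ s : S, a • s • n = 0 by simpa using this 1
      induction hn using Submodule.span_induction with
      | mem x hx =>
        obtain ⟨n, hn, rfl⟩ := hx
        intro s
        have := Submodule.mem_annihilator.1 (hab s) n hn
        rwa [mul_smul, mul_smul] at this
      | zero => simp
      | add x y _ _ hx hy => intro s; simp [hx s, hy s]
      | smul t x _ hx => intro s; rw [← mul_smul s]; exact hx _
    refine hmax _ ⟨L, hL, rfl⟩ (lt_of_le_of_ne ?_ ?_)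
    · exact Submodule.annihilator_mono hLN
    · intro h
      rw [← h] at haL
      exact ha haL

variable {A S : Type u} [CommRing A] [IsNoetherianRing A] [Ring S] [Algebra A S]

theorem emb_ann (C : Type u) [AddCommGroup C] [Module A C] [Module S C] [IsScalarTower A S C]
    [Module.Finite A C] : ∃ (r : ℕ) (f : (S ⧸ Module.annihilator S C) →ₗ[S] (Fin r → C)),
      Function.Injective f := by
  obtain ⟨r, s, hs⟩ := Module.Finite.exists_fin (R := A) (M := C)
  refine ⟨r, (Module.annihilator S C).liftQ
    (LinearMap.pi fun i => LinearMap.toSpanSingleton S C (s i)) ?_, ?_⟩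
  · intro x hx
    rw [LinearMap.mem_ker]
    ext i
    exact Module.mem_annihilator.1 hx _
  · rw [← LinearMap.ker_eq_bot]
    refine Submodule.ker_liftQ_eq_bot _ _ _ ?_
    intro x hx
    rw [LinearMap.mem_ker] at hx
    rw [Module.mem_annihilator]
    intro c
    have hc : c ∈ Submodule.span A (Set.range s) := hs ▸ Submodule.mem_top
    induction hc using Submodule.span_induction with
    | mem y hy =>
      obtain ⟨i, rfl⟩ := hy
      exact congrFun hx i
    | zero => simp
    | add y z _ _ hy hz => rw [smul_add, hy, hz, add_zero]
    | smul t y _ hy => rw [smul_comm, hy, smul_zero]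

theorem surj_ann (C : Type u) [AddCommGroup C] [Module S C]
    [Module.Finite S C] : ∃ (r : ℕ) (f : (Fin r → (S ⧸ Module.annihilator S C)) →ₗ[S] C),
      Function.Surjective f := by
  obtain ⟨r, s, hs⟩ := Module.Finite.exists_fin (R := S) (M := C)
  let g : Fin r → (S ⧸ Module.annihilator S C) →ₗ[S] C := fun i =>
    (Module.annihilator S C).liftQ (LinearMap.toSpanSingleton S C (s i)) (by
      intro x hx
      exact Module.mem_annihilator.1 hx _)
  refine ⟨r, LinearMap.lsum S _ ℕ g, ?_⟩
  rw [← LinearMap.range_eq_top, eq_top_iff, ← hs, Submodule.span_le]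
  rintro _ ⟨i, rfl⟩
  refine ⟨Pi.single i (Submodule.Quotient.mk 1), ?_⟩
  rw [LinearMap.lsum_piSingle]
  exact (Submodule.liftQ_apply _ _ _).trans (by simp)

theorem supp_ann [Module.Finite A S] (C : Type u) [AddCommGroup C] [Module A C] [Module S C]
    [IsScalarTower A S C] [Module.Finite A C] :
    Module.support A (S ⧸ Module.annihilator S C) = Module.support A C := by
  rw [Module.support_eq_zeroLocus, Module.support_eq_zeroLocus]
  congr 2
  ext a
  rw [Module.mem_annihilator, Module.mem_annihilator]
  constructor
  · intro h c
    have := h (Submodule.Quotient.mk 1)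
    rw [← Submodule.Quotient.mk_smul, Submodule.Quotient.mk_eq_zero, Module.mem_annihilator] at this
    simpa using this c
  · intro h x
    obtain ⟨x, rfl⟩ := Submodule.Quotient.mk_surjective _ x
    rw [← Submodule.Quotient.mk_smul, Submodule.Quotient.mk_eq_zero, Module.mem_annihilator]
    intro m
    rw [smul_assoc, h]

variable {C : Type u} [AddCommGroup C] [Module A C] [Module S C]
    [IsScalarTower A S C] [Module.Finite A C] {p : PrimeSpectrum A}

theorem Crit.tors (h : Crit S p C) (L : Submodule S C) (hL : L ≠ ⊥) :
    ∃ a ∉ p.asIdeal, ∀ c : C, a • c ∈ L := by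
  have := h.2 L hL
  rw [Module.mem_support_iff_of_finite] at this
  obtain ⟨a, ha, hap⟩ := SetLike.not_le_iff_exists.1 this
  refine ⟨a, hap, fun c => ?_⟩
  have := Module.mem_annihilator.1 ha (Submodule.Quotient.mk c)
  rwa [← Submodule.Quotient.mk_smul, Submodule.Quotient.mk_eq_zero] at this

theorem Crit.nontrivial (h : Crit S p C) : Nontrivial C := by
  by_contra hc
  rw [not_nontrivial_iff_subsingleton] at hc
  have := h.1
  rw [Module.support_eq_empty] at this
  exact this

theorem Crit.prime (h : Crit S p C) : IsPrimeL (Module.annihilator S C) := by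
  have := h.nontrivial
  refine ⟨?_, ann_twosided _, ?_⟩
  · intro h
    exact not_subsingleton C (Module.annihilator_eq_top_iff.1 h)
  · intro a b hab
    by_contra hc
    push Not at hc
    obtain ⟨ha, hb⟩ := hc
    set L : Submodule S C := Submodule.span S (Set.range (fun n : C => b • n))
    have hL : L ≠ ⊥ := by
      intro h
      apply hb
      refine Module.mem_annihilator.2 fun n => ?_
      have : b • n ∈ L := Submodule.subset_span ⟨n, rfl⟩
      rw [h] at this
      exact this
    have haL : ∀ n ∈ L, a • n = 0 := by
      intro n hn
      suffices ∀ s : S, a • s • n = 0 by simpa using this 1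
      induction hn using Submodule.span_induction with
      | mem x hx =>
        obtain ⟨n, rfl⟩ := hx
        intro s
        have := Module.mem_annihilator.1 (hab s) n
        rwa [mul_smul, mul_smul] at this
      | zero => simp
      | add x y _ _ hx hy => intro s; simp [hx s, hy s]
      | smul t x _ hx => intro s; rw [← mul_smul s]; exact hx _
    obtain ⟨t, htp, ht⟩ := h.tors L hL
    apply ha
    refine Module.mem_annihilator.2 fun n => ?_
    apply h.smul_inj htp
    rw [smul_comm]
    exact haL _ (ht n)

theorem Crit.complement (h : Crit S p C) {r : ℕ} (N : Submodule S (Fin r → C)) :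
    ∃ N' : Submodule S (Fin r → C), Disjoint N N' ∧
      ∃ a ∉ p.asIdeal, ∀ x : Fin r → C, a • x ∈ N ⊔ N' := by
  have := h.nontrivial
  have : IsNoetherian S (Fin r → C) := noeth_S (A := A)
  have hne : {K : Submodule S (Fin r → C) | Disjoint N K}.Nonempty := ⟨⊥, disjoint_bot_right⟩
  obtain ⟨N', hN', hmax⟩ := (wellFounded_gt (α := Submodule S (Fin r → C))).has_min _ hne
  refine ⟨N', hN', ?_⟩
  have key : ∀ j, ∃ a ∉ p.asIdeal, ∀ c : C, a • c ∈
      (N ⊔ N').comap (LinearMap.single S (fun _ : Fin r => C) j) := by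
    intro j
    refine h.tors _ fun hb => ?_
    refine hmax (N' ⊔ LinearMap.range (LinearMap.single S (fun _ : Fin r => C) j)) ?_
      (lt_of_le_of_ne le_sup_left ?_)
    · show Disjoint _ _
      rw [Submodule.disjoint_def]
      intro x hx hx'
      obtain ⟨n', hn', y, ⟨c, rfl⟩, rfl⟩ := Submodule.mem_sup.1 hx'
      have hc : c ∈ (N ⊔ N').comap (LinearMap.single S (fun _ : Fin r => C) j) := by
        rw [Submodule.mem_comap]
        have := (N ⊔ N').sub_mem (Submodule.mem_sup_left hx) (Submodule.mem_sup_right hn')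
        rwa [add_sub_cancel_left] at this
      rw [hb, Submodule.mem_bot] at hc
      subst hc
      rw [map_zero, add_zero] at hx ⊢
      exact Submodule.disjoint_def.1 hN' _ hx hn'
    · intro he
      have h1 : LinearMap.range (LinearMap.single S (fun _ : Fin r => C) j) ≤ N' := by
        rw [he]; exact le_sup_right
      obtain ⟨c, hc⟩ := exists_ne (0 : C)
      apply hc
      have hc : c ∈ (N ⊔ N').comap (LinearMap.single S (fun _ : Fin r => C) j) :=
        Submodule.mem_sup_right (h1 ⟨c, rfl⟩)
      rwa [hb, Submodule.mem_bot] at hc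
  choose a hap ha using key
  refine ⟨∏ j, a j, ?_, fun x => ?_⟩
  · exact p.asIdeal.primeCompl.prod_mem fun j _ => hap j
  · have : (∏ j, a j) • x = ∑ j, LinearMap.single S (fun _ : Fin r => C) j ((∏ j, a j) • x j) := by
      conv_lhs => rw [← Finset.univ_sum_single ((∏ j, a j) • x)]
      rfl
    rw [this]
    refine Submodule.sum_mem _ fun j _ => ?_
    rw [← Finset.prod_erase_mul _ _ (Finset.mem_univ j), mul_smul, ← mul_smul, mul_comm, mul_smul]
    exact ha j _

theorem not_mem_supp_of_smul {X : Type u} [AddCommGroup X] [Module A X] {a : A}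
    (ha : a ∉ p.asIdeal) (h : ∀ x : X, a • x = 0) : p ∉ Module.support A X := fun hp =>
  ha (Module.annihilator_le_of_mem_support hp (Module.mem_annihilator.2 h))

theorem supp_pi_le (r : ℕ) (q : PrimeSpectrum A) (hq : q ∈ Module.support A (Fin r → C)) :
    q ∈ Module.support A C := by
  rw [Module.mem_support_iff_of_finite] at *
  refine le_trans (fun a ha => ?_) hq
  rw [Module.mem_annihilator] at *
  intro m
  ext i
  exact ha _

theorem tors_transfer {B E : Type u} [AddCommGroup B] [Module A B] [Module S B]
    [IsScalarTower A S B] [Module.Finite A B] [AddCommGroup E] [Module A E] [Module S E]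
    [IsScalarTower A S E] [Module.Finite A E] (g : B →ₗ[S] E) (hg : Function.Injective g)
    {a : A} (ha : a ∉ p.asIdeal) (haE : ∀ e : E, a • e ∈ LinearMap.range g) (i : ℕ)
    (hE : EV S i E) (hsE : ∀ q ∈ Module.support A E, p ≤ q)
    (hLow : ∀ j < i, ∀ (X : Type u) [AddCommGroup X] [Module A X] [Module S X] [IsScalarTower A S X]
      [Module.Finite A X], (∀ q ∈ Module.support A X, p ≤ q) → EV S j X)
    (hTor : ∀ (X : Type u) [AddCommGroup X] [Module A X] [Module S X] [IsScalarTower A S X]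
      [Module.Finite A X], (∀ q ∈ Module.support A X, p < q) → EV S i X) : EV S i B := by
  let k : E →ₗ[S] B := (LinearEquiv.ofInjective g hg).symm.toLinearMap ∘ₗ
    (DistribSMul.toLinearMap S E a).codRestrict (LinearMap.range g) haE
  have hk : ∀ e, g (k e) = a • e := by
    intro e
    have := congrArg Subtype.val ((LinearEquiv.ofInjective g hg).apply_symm_apply
      ((DistribSMul.toLinearMap S E a).codRestrict (LinearMap.range g) haE e))
    exact this
  have h1 : EV S i (LinearMap.range k) := by
    refine EV.quot k.rangeRestrict k.surjective_rangeRestrict hE fun j hj => ?_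
    have := finite_sub (A := A) (LinearMap.ker k.rangeRestrict)
    exact hLow j hj _ fun q hq => hsE q (supp_sub_le _ hq)
  refine EV.sub (LinearMap.range k) h1 (hTor _ fun q hq => ?_)
  refine lt_of_le_of_ne (hsE q ?_) ?_
  · exact Module.support_subset_of_injective (g.restrictScalars A) hg (supp_quot_le _ hq)
  · rintro rfl
    refine not_mem_supp_of_smul ha (fun x => ?_) hq
    obtain ⟨b, rfl⟩ := Submodule.Quotient.mk_surjective _ x
    rw [← Submodule.Quotient.mk_smul, Submodule.Quotient.mk_eq_zero]
    refine ⟨g b, hg ?_⟩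
    rw [hk, ← algebraMap_smul S a b, map_smul, algebraMap_smul]

theorem Crit.key [Module.Finite A S] (h : Crit S p C) (i : ℕ)
    (hLow : ∀ j < i, ∀ (X : Type u) [AddCommGroup X] [Module A X] [Module S X] [IsScalarTower A S X]
      [Module.Finite A X], (∀ q ∈ Module.support A X, p ≤ q) → EV S j X)
    (hTor : ∀ (X : Type u) [AddCommGroup X] [Module A X] [Module S X] [IsScalarTower A S X]
      [Module.Finite A X], (∀ q ∈ Module.support A X, p < q) → EV S i X)
    (hC : EV S i C) : EV S i (S ⧸ Module.annihilator S C) := by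
  have hsC : ∀ q ∈ Module.support A C, p ≤ q := by
    intro q hq
    have := Module.annihilator_le_of_mem_support hq
    rwa [h.ann] at this
  obtain ⟨r, f, hf⟩ := emb_ann (A := A) (S := S) C
  obtain ⟨N', hd, a, ha, haN⟩ := h.complement (LinearMap.range f)
  have hsP : ∀ q ∈ Module.support A (Fin r → C), p ≤ q := fun q hq => hsC q (supp_pi_le r q hq)
  have hE : EV S i ((Fin r → C) ⧸ N') := by
    refine EV.quot N'.mkQ N'.mkQ_surjective (hC.pi r) fun j hj => ?_
    have := finite_sub (A := A) (LinearMap.ker N'.mkQ)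
    exact hLow j hj _ fun q hq => hsP q (supp_sub_le _ hq)
  have hsE : ∀ q ∈ Module.support A ((Fin r → C) ⧸ N'), p ≤ q := fun q hq =>
    hsP q (supp_quot_le _ hq)
  refine tors_transfer (N'.mkQ ∘ₗ f) ?_ ha ?_ i hE hsE hLow hTor
  · rw [← LinearMap.ker_eq_bot, LinearMap.ker_eq_bot']
    intro b hb
    have h1 : f b ∈ N' := by simpa using hb
    have h2 := Submodule.disjoint_def.1 hd _ ⟨b, rfl⟩ h1
    exact hf (by rw [h2, map_zero])
  · intro e
    obtain ⟨x, rfl⟩ := N'.mkQ_surjective e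
    obtain ⟨_, ⟨b, rfl⟩, n', hn', hx⟩ := Submodule.mem_sup.1 (haN x)
    refine ⟨b, ?_⟩
    have h3 : a • N'.mkQ x = N'.mkQ (a • x) := rfl
    rw [h3, ← hx, map_add, LinearMap.comp_apply]
    simpa using hn'
/-- hypothesis on primes -/
def PrimeHyp (S : Type u) [Ring S] (d : ℕ∞) : Prop :=
  ∀ P : Ideal S, IsPrimeL P → d = moduleKdim S (S ⧸ P) + homGrade S (S ⧸ P)

theorem part1 [Module.Finite A S] {d : ℕ∞} (H : PrimeHyp S d) (k : ℕ) (i : ℕ) :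
    ((k + i : ℕ) : ℕ∞) < d → ∀ (M : Type u) [AddCommGroup M] [Module A M] [Module S M]
    [IsScalarTower A S M] [Module.Finite A M], (∀ p ∈ Module.support A M, Order.coheight p ≤ k) →
    EV S i M := by
  induction i using Nat.strong_induction_on with
  | _ i ih =>
  intro hd M _ _ _ _ _ hM
  have hlow : ∀ j < i, ∀ (M : Type u) [AddCommGroup M] [Module A M] [Module S M]
    [IsScalarTower A S M] [Module.Finite A M], (∀ p ∈ Module.support A M, Order.coheight p ≤ k) →
    EV S j M := fun j hj => ih j hj (lt_of_le_of_lt (by gcongr) hd)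
  have hprime : ∀ (N : Type u) [AddCommGroup N] [Module A N] [Module S N]
    [IsScalarTower A S N] [Module.Finite A N], (∀ p ∈ Module.support A N, Order.coheight p ≤ k) →
    IsPrimeL (Module.annihilator S N) → EV S i N := by
    intro N _ _ _ _ _ hN hP
    have hsP : ∀ p ∈ Module.support A (S ⧸ Module.annihilator S N), Order.coheight p ≤ k := by
      rw [supp_ann]; exact hN
    have h1 : EV S i (S ⧸ Module.annihilator S N) := by
      by_contra hE
      have h2 := homGrade_le hE
      have h3 := (kdim_le_iff (A := A) (S := S) (S ⧸ Module.annihilator S N) k).2 hsP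
      have h4 := H _ hP
      refine absurd (add_le_add h3 h2) ?_
      rw [← h4, not_le]
      exact_mod_cast hd
    have : Module.Finite S N := Module.Finite.of_restrictScalars_finite A S N
    obtain ⟨r, f, hf⟩ := surj_ann (S := S) N
    refine EV.quot f hf (h1.pi r) fun j hj => ?_
    have := finite_sub (A := A) (LinearMap.ker f)
    exact hlow j hj _ fun q hq => hsP q (supp_pi_le r q (supp_sub_le _ hq))
  have : IsNoetherian S M := noeth_S (A := A)
  have : IsNoetherianRing S := noeth_S (A := A)
  have hne : {N : Submodule S M | EV S i N}.Nonempty := ⟨⊥, EV.zero⟩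
  obtain ⟨N, hN, hmax⟩ := (wellFounded_gt (α := Submodule S M)).has_min _ hne
  by_cases htop : N = ⊤
  · subst htop
    exact EV.equiv Submodule.topEquiv hN
  · exfalso
    have : Nontrivial (M ⧸ N) := Submodule.Quotient.nontrivial_iff.2 htop
    obtain ⟨L, hL, hLP⟩ := exists_prime_sub (S := S) (M ⧸ N)
    have := finite_sub (A := A) L
    have hEL := hprime L (fun p hp => hM p (supp_quot_le _ (supp_sub_le _ hp))) hLP
    have hle : N ≤ L.comap N.mkQ := Submodule.le_comap_mkQ N L
    refine hmax (L.comap N.mkQ) ?_ (lt_of_le_of_ne hle ?_)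
    · let g : (L.comap N.mkQ) →ₗ[S] L := N.mkQ.restrict fun x hx => hx
      refine EV.ext (Submodule.inclusion hle) g (Submodule.inclusion_injective hle) ?_ ?_ hN hEL
      · rintro ⟨y, hy⟩
        obtain ⟨x, rfl⟩ := N.mkQ_surjective y
        exact ⟨⟨x, hy⟩, rfl⟩
      · rintro ⟨x, hx⟩
        constructor
        · intro h
          have h' : N.mkQ x = 0 := congrArg Subtype.val h
          have : x ∈ N := by simpa using h'
          exact ⟨⟨x, this⟩, rfl⟩
        · rintro ⟨y, hy⟩
          have : x ∈ N := by
            have := congrArg Subtype.val hy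
            simp only [Submodule.coe_inclusion] at this
            exact this ▸ y.2
          refine Subtype.ext ?_
          show N.mkQ x = 0
          simpa using this
    · intro h
      apply hL
      rw [← Submodule.map_comap_eq_of_surjective N.mkQ_surjective L, ← h, Submodule.mkQ_map_self]

theorem coheight_le_d [Module.Finite A S] {d : ℕ∞} (H : PrimeHyp S d)
    (M : Type u) [AddCommGroup M] [Module A M] [Module S M]
    [IsScalarTower A S M] [Module.Finite A M] (p : PrimeSpectrum A) (hp : p ∈ Module.support A M) :
    Order.coheight p ≤ d := by
  obtain ⟨K, hK⟩ := exists_crit S M p hp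
  rw [H _ hK.prime]
  refine le_trans (coheight_le_kdim (A := A) (S := S) _ p ?_) le_self_add
  rw [supp_ann]
  exact hK.1

theorem part2 [Module.Finite A S] {d : ℕ∞} (H : PrimeHyp S d)
    (M : Type u) [AddCommGroup M] [Module A M] [Module S M]
    [IsScalarTower A S M] [Module.Finite A M] (p : PrimeSpectrum A) (hp : p ∈ Module.support A M)
    (k i : ℕ) (hk : Order.coheight p = k) (hM : ∀ q ∈ Module.support A M, Order.coheight q ≤ k)
    (hd : d = ((k + i : ℕ) : ℕ∞)) : ¬ EV S i M := by
  intro hE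
  obtain ⟨K, hK⟩ := exists_crit S M p hp
  have hlow : ∀ j < i, ∀ (X : Type u) [AddCommGroup X] [Module A X] [Module S X]
    [IsScalarTower A S X] [Module.Finite A X], (∀ q ∈ Module.support A X, Order.coheight q ≤ k) →
    EV S j X := fun j hj => part1 H k j (by rw [hd]; exact_mod_cast (by omega))
  have hC : EV S i (M ⧸ K) := by
    refine EV.quot K.mkQ K.mkQ_surjective hE fun j hj => ?_
    have := finite_sub (A := A) (LinearMap.ker K.mkQ)
    exact hlow j hj _ fun q hq => hM q (supp_sub_le _ hq)
  have hP := hK.key i ?_ ?_ hC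
  · have hkd : moduleKdim S (S ⧸ Module.annihilator S (M ⧸ K)) = k := by
      refine le_antisymm ((kdim_le_iff (A := A) _ k).2 ?_) ?_
      · rw [supp_ann]
        exact fun q hq => hM q (supp_quot_le _ hq)
      · rw [← hk]
        refine coheight_le_kdim (A := A) _ p ?_
        rw [supp_ann]
        exact hK.1
    have h2 := H _ hK.prime
    rw [hkd, hd, Nat.cast_add] at h2
    exact not_EV_of_homGrade (ENat.add_right_injective_of_ne_top (ENat.natCast_ne_top k) h2).symm hP
  · intro j hj X _ _ _ _ _ hX
    exact hlow j hj X fun q hq => (Order.coheight_anti (hX q hq)).trans hk.le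
  · intro X _ _ _ _ _ hX
    cases k with
    | zero =>
      have : Module.support A X = ∅ := by
        rw [Set.eq_empty_iff_forall_notMem]
        intro q hq
        have hmax : IsMax p := by simpa using hk
        exact hmax.not_lt (hX q hq)
      rw [Module.support_eq_empty_iff] at this
      exact EV.zero
    | succ k =>
      refine part1 (A := A) H k i (by rw [hd]; exact_mod_cast (by omega)) X fun q hq => ?_
      have := (Order.coheight_add_one_le (hX q hq)).trans hk.le
      rw [Nat.cast_succ] at this
      exact (ENat.add_le_add_iff_right ENat.one_ne_top).1 this

theorem main_S [Module.Finite A S] {d : ℕ∞} (H : PrimeHyp S d)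
    (M : Type u) [AddCommGroup M] [Module A M] [Module S M]
    [IsScalarTower A S M] [Module.Finite A M] [Nontrivial M] :
    d = moduleKdim S M + homGrade S M := by
  cases hk : moduleKdim S M with
  | top =>
    rw [top_add]
    by_contra hd
    lift d to ℕ using hd
    have := (kdim_le_iff (A := A) (S := S) M d).2 fun p hp => coheight_le_d H M p hp
    rw [hk] at this
    exact absurd this (by simp)
  | coe k =>
    have hM := (kdim_le_iff (A := A) (S := S) M k).1 hk.le
    have hge : d ≤ k + homGrade S M := by
      by_contra hlt
      rw [not_le] at hlt
      cases hj : homGrade S M with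
      | top => rw [hj] at hlt; simp at hlt
      | coe i =>
        rw [hj] at hlt
        exact not_EV_of_homGrade hj (part1 H k i (by exact_mod_cast hlt) M hM)
    refine le_antisymm hge ?_
    by_cases hd : d = ⊤
    · rw [hd]; exact le_top
    lift d to ℕ using hd
    obtain ⟨p, hp, hpk⟩ : ∃ p ∈ Module.support A M, Order.coheight p = k := by
      by_contra hc
      push Not at hc
      cases k with
      | zero =>
        obtain ⟨p, hp⟩ := Module.nonempty_support_of_nontrivial (R := A) (M := M)
        exact hc p hp (le_antisymm (hM p hp) (by simp))
      | succ k =>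
        have := (kdim_le_iff (A := A) (S := S) M k).2 fun p hp => by
          have := lt_of_le_of_ne (hM p hp) (hc p hp)
          rw [Nat.cast_succ] at this
          exact Order.le_of_lt_add_one this
        rw [hk] at this
        exact absurd (Nat.cast_le.1 this) (by omega)
    have hkd : k ≤ d := by
      have := coheight_le_d H M p hp
      rw [hpk] at this
      exact_mod_cast this
    obtain ⟨i, rfl⟩ := Nat.exists_eq_add_of_le hkd
    have := homGrade_le (part2 H M p hp k i hpk hM rfl)
    rw [Nat.cast_add]
    gcongr
end main

section formanek
variable {A B : Type u} [CommRing A] [AddCommGroup B] [Module A B]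

theorem noeth_quot_ann [Module.Finite A B] [IsNoetherian A B] :
    IsNoetherian A (A ⧸ Module.annihilator A B) := by
  obtain ⟨s, hs⟩ := (Module.Finite.fg_top : (⊤ : Submodule A B).FG)
  let f : A →ₗ[A] (s → B) := LinearMap.pi fun b => LinearMap.toSpanSingleton A B b.1
  have hf : LinearMap.ker f = Module.annihilator A B := by
    ext a
    rw [← Submodule.annihilator_top, ← hs, Submodule.mem_annihilator_span]
    simp [f, LinearMap.mem_ker, funext_iff]
  have : Function.Injective ((LinearMap.ker f).liftQ f le_rfl) := by
    rw [← LinearMap.ker_eq_bot]; exact Submodule.ker_liftQ_eq_bot _ _ _ le_rfl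
  have := isNoetherian_of_injective _ this
  rwa [hf] at this

theorem noeth_of_quot_ann [Module.Finite A B] (I : Ideal A) (hI : I ≤ Module.annihilator A B)
    [IsNoetherian A (A ⧸ I)] : IsNoetherian A B := by
  classical
  obtain ⟨s, hs⟩ := (Module.Finite.fg_top : (⊤ : Submodule A B).FG)
  let f : (s → A ⧸ I) →ₗ[A] B := LinearMap.lsum A (fun _ => A ⧸ I) A
    fun b => I.liftQ (LinearMap.toSpanSingleton A B b.1)
      fun a ha => by simpa using Module.mem_annihilator.1 (hI ha) b.1
  refine isNoetherian_of_surjective f ?_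
  rw [eq_top_iff, ← hs, Submodule.span_le]
  intro b hb
  refine ⟨Pi.single ⟨b, hb⟩ (Submodule.Quotient.mk 1), ?_⟩
  simp only [f, LinearMap.lsum_piSingle]
  exact (Submodule.liftQ_apply _ _ _).trans (by simp)

theorem formanek [Module.Finite A B]
    (hacc : WellFounded fun I J : Ideal A => J • (⊤ : Submodule A B) < I • (⊤ : Submodule A B)) :
    IsNoetherian A B := by
  by_contra hB
  have hne : {I : Ideal A | ¬ IsNoetherian A (B ⧸ I • (⊤ : Submodule A B))}.Nonempty := by
    refine ⟨⊥, fun h => hB ?_⟩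
    refine isNoetherian_of_linearEquiv (Submodule.quotEquivOfEqBot ((⊥ : Ideal A) • (⊤ : Submodule A B)) (Submodule.bot_smul _))
  obtain ⟨I, hI, hmax⟩ := hacc.has_min _ hne
  have hmax : ∀ J : Ideal A, I • (⊤ : Submodule A B) < J • (⊤ : Submodule A B) →
      IsNoetherian A (B ⧸ J • (⊤ : Submodule A B)) := by
    intro J hJ
    by_contra hc
    exact hmax J hc hJ
  obtain ⟨s, hs⟩ := (Module.Finite.fg_top : (⊤ : Submodule A B).FG)
  have key : ∀ (N : Submodule A B) (a : A), (∀ b ∈ s, a • b ∈ N) → ∀ b, a • b ∈ N := by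
    intro N a h b
    have : (⊤ : Submodule A B) ≤ N.comap (LinearMap.lsmul A B a) := by
      rw [← hs, Submodule.span_le]
      exact fun b hb => h b hb
    exact this (Submodule.mem_top (x := b))
  obtain ⟨N, hIN, hN⟩ := zorn_le_nonempty₀
    {N : Submodule A B | ∀ a : A, (∀ b, a • b ∈ N) → ∀ b, a • b ∈ I • (⊤ : Submodule A B)} (by
      intro c hc hch y hy
      refine ⟨sSup c, ?_, fun z hz => le_sSup hz⟩
      intro a ha
      have hdir : DirectedOn (· ≤ ·) c := hch.directedOn
      have : ∃ z ∈ c, ∀ b ∈ s, a • b ∈ z := by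
        have h1 : ∀ t : Finset B, ∃ z ∈ c, ∀ b ∈ t, a • b ∈ z := by
          classical
          intro t
          induction t using Finset.induction_on with
          | empty => exact ⟨y, hy, by simp⟩
          | insert b t hb ih =>
            obtain ⟨z, hz, hzt⟩ := ih
            obtain ⟨w, hw, hwb⟩ := (Submodule.mem_sSup_of_directed ⟨y, hy⟩ hdir).1 (ha b)
            obtain ⟨v, hv, hzv, hwv⟩ := hdir z hz w hw
            refine ⟨v, hv, ?_⟩
            simp only [Finset.mem_insert, forall_eq_or_imp]
            exact ⟨hwv hwb, fun b hb => hzv (hzt b hb)⟩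
        exact h1 s
      obtain ⟨z, hz, hzs⟩ := this
      exact hc hz a (key z a hzs)) (I • ⊤) (fun a ha => ha)
  have hann : Module.annihilator A (B ⧸ N) ≤ Module.annihilator A (B ⧸ I • (⊤ : Submodule A B)) := by
    intro a ha
    rw [Module.mem_annihilator] at *
    have := hN.prop a fun b => by
      have := ha (N.mkQ b)
      rwa [← map_smul, Submodule.mkQ_apply, Submodule.Quotient.mk_eq_zero] at this
    intro m
    obtain ⟨b, rfl⟩ := Submodule.mkQ_surjective _ m
    rw [← map_smul, Submodule.mkQ_apply, Submodule.Quotient.mk_eq_zero]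
    exact this b
  by_cases hBN : IsNoetherian A (B ⧸ N)
  · have := noeth_quot_ann (A := A) (B := B ⧸ N)
    exact hI (noeth_of_quot_ann _ hann)
  · apply hBN
    refine ⟨fun L => ?_⟩
    by_cases hL : L = ⊥
    · rw [hL]; exact Submodule.fg_bot
    have hlt : ¬ L.comap N.mkQ ≤ N := by
      intro h
      apply hL
      rw [eq_bot_iff]
      intro m hm
      obtain ⟨b, rfl⟩ := Submodule.mkQ_surjective _ m
      have : b ∈ N := h hm
      simpa using this
    have hle : N ≤ L.comap N.mkQ := fun b hb => by
      have : N.mkQ b = 0 := by simpa using hb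
      rw [Submodule.mem_comap, this]; exact L.zero_mem
    have : ∃ a : A, (∀ b, a • b ∈ L.comap N.mkQ) ∧ ¬ ∀ b, a • b ∈ I • (⊤ : Submodule A B) := by
      by_contra hc
      push Not at hc
      exact hlt (hN.le_of_ge (fun a ha => hc a ha) hle)
    obtain ⟨a, haL, haI⟩ := this
    let K : Submodule A (B ⧸ N) := LinearMap.range (a • N.mkQ)
    have hJ : IsNoetherian A (B ⧸ (I ⊔ Ideal.span {a}) • (⊤ : Submodule A B)) := by
      apply hmax
      refine lt_of_le_of_ne (Submodule.smul_mono_left le_sup_left) fun h => haI fun b => ?_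
      rw [h]
      exact Submodule.smul_mem_smul (Ideal.mem_sup_right (Ideal.mem_span_singleton_self a))
        Submodule.mem_top
    have hK : IsNoetherian A ((B ⧸ N) ⧸ K) := by
      refine isNoetherian_of_surjective
        (Submodule.liftQ ((I ⊔ Ideal.span {a}) • (⊤ : Submodule A B)) (K.mkQ ∘ₗ N.mkQ) ?_) ?_
      · rw [Submodule.sup_smul, sup_le_iff]
        constructor
        · intro x hx
          have : N.mkQ x = 0 := by simpa using hIN hx
          simp [this]
        · rw [Submodule.smul_le]
          intro r hr b _
          obtain ⟨c, rfl⟩ := Ideal.mem_span_singleton'.1 hr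
          rw [LinearMap.mem_ker, LinearMap.comp_apply, mul_smul, map_smul, map_smul]
          have : N.mkQ (a • b) ∈ K := ⟨b, by simp⟩
          have : K.mkQ (N.mkQ (a • b)) = 0 := (Submodule.Quotient.mk_eq_zero K).2 this
          rw [this, smul_zero]
      · rw [Submodule.range_liftQ, LinearMap.range_eq_top]
        exact (Submodule.mkQ_surjective _).comp (Submodule.mkQ_surjective _)
    refine Submodule.fg_of_fg_map_of_fg_inf_ker K.mkQ (IsNoetherian.noetherian _) ?_
    rw [Submodule.ker_mkQ, inf_eq_right.2]
    · exact (Submodule.fg_top K).1 (Module.Finite.fg_top (R := A) (M := LinearMap.range (a • N.mkQ)))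
    · rintro _ ⟨b, rfl⟩
      have := haL b
      simpa using this

theorem eakin {A R : Type u} [CommRing A] [Ring R] [Algebra A R] [IsNoetherianRing R]
    [Module.Finite A R] (hinj : Function.Injective (algebraMap A R)) : IsNoetherianRing A := by
  have hacc : WellFounded fun I J : Ideal A => J • (⊤ : Submodule A R) < I • (⊤ : Submodule A R) := by
    let F : Ideal A → Ideal R := fun I => Submodule.span R (algebraMap A R '' I)
    have hF : ∀ I, (F I).restrictScalars A = I • (⊤ : Submodule A R) := by
      intro I
      apply le_antisymm
      · intro x hx
        have hx : x ∈ F I := hx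
        induction hx using Submodule.span_induction with
        | mem x h =>
          obtain ⟨a, ha, rfl⟩ := h
          rw [Algebra.algebraMap_eq_smul_one]
          exact Submodule.smul_mem_smul ha Submodule.mem_top
        | zero => exact zero_mem _
        | add x y _ _ h1 h2 => exact add_mem (h1 ‹_›) (h2 ‹_›)
        | smul r x _ h =>
          have h := h ‹_›
          have h2 : I • (⊤ : Submodule A R) ≤
              (I • (⊤ : Submodule A R)).comap (LinearMap.mulLeft A r) := by
            rw [Submodule.smul_le]
            intro a ha n _
            rw [Submodule.mem_comap, LinearMap.mulLeft_apply, mul_smul_comm]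
            exact Submodule.smul_mem_smul ha Submodule.mem_top
          exact h2 h
      · rw [Submodule.smul_le]
        intro a ha r _
        rw [Algebra.smul_def, Algebra.commutes]
        exact (F I).smul_mem r (Submodule.subset_span ⟨a, ha, rfl⟩)
    refine Subrelation.wf (r := InvImage (· > ·) F) ?_ (InvImage.wf F wellFounded_gt)
    intro I J h
    rw [← hF, ← hF] at h
    exact h
  have hB := formanek hacc
  refine isNoetherian_of_injective (Algebra.linearMap A R) hinj
end formanek

theorem main_mod {A S : Type u} [CommRing A] [IsNoetherianRing A] [Ring S] [Algebra A S]
    [Module.Finite A S] {d : ℕ∞} (H : PrimeHyp S d) (M : Type u) [AddCommGroup M] [Module S M]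
    [Module.Finite S M] [Nontrivial M] : d = moduleKdim S M + homGrade S M := by
  letI : Module A M := Module.compHom M (algebraMap A S)
  haveI : IsScalarTower A S M := ⟨fun a s m => by
    rw [Algebra.smul_def, mul_smul]; rfl⟩
  haveI : Module.Finite A M := Module.Finite.trans S M
  exact main_S (A := A) H M

/-- Let `R` be a noetherian ring which is a finite module over its centre, and suppose
that for every prime ideal `P` of `R` one has `Kdim R = Kdim (R/P) + j_R(R/P)` for
both the left and the right homological grade.  Then for every nonzero finitely
generated left or right `R`-module `M`, `Kdim R = Kdim M + j_R(M)`: the ring `R` is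
Krull-Macaulay. -/
theorem krull_macaulay_of_prime_condition (R : Type u) [Ring R] [IsNoetherianRing R]
    [Module.Finite (Subring.center R) R]
    (h : ∀ P : TwoSidedIdeal R, IsPrimeTS P →
      moduleKdim R R =
          moduleKdim R (R ⧸ TwoSidedIdeal.asIdeal P) +
            homGrade R (R ⧸ TwoSidedIdeal.asIdeal P) ∧
      moduleKdim R R =
          moduleKdim Rᵐᵒᵖ (Rᵐᵒᵖ ⧸ tsOpIdeal P) + homGrade Rᵐᵒᵖ (Rᵐᵒᵖ ⧸ tsOpIdeal P)) :
    (∀ (M : Type u) [AddCommGroup M] [Module R M] [Module.Finite R M], Nontrivial M →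
      moduleKdim R R = moduleKdim R M + homGrade R M) ∧
    (∀ (M : Type u) [AddCommGroup M] [Module Rᵐᵒᵖ M] [Module.Finite Rᵐᵒᵖ M],
      Nontrivial M → moduleKdim R R = moduleKdim Rᵐᵒᵖ M + homGrade Rᵐᵒᵖ M) := by
  haveI hA : IsNoetherianRing (Subring.center R) := eakin (R := R) Subtype.val_injective
  have H1 : PrimeHyp R (moduleKdim R R) := by
    rintro P ⟨hP1, hP2, hP3⟩
    let Q : TwoSidedIdeal R := TwoSidedIdeal.mk' (P : Set R) P.zero_mem
      (fun ha hb => P.add_mem ha hb) (fun ha => P.neg_mem ha) (fun ha => P.mul_mem_left _ ha)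
      (fun ha => hP2 _ ha _)
    have hQ : ∀ x, x ∈ Q ↔ x ∈ P := fun x => TwoSidedIdeal.mem_mk' _ _ _ _ _ _ _
    have hQP : TwoSidedIdeal.asIdeal Q = P := by
      ext x
      rw [TwoSidedIdeal.mem_asIdeal, hQ]
    have hQ' : IsPrimeTS Q := by
      refine ⟨fun ht => hP1 ?_, fun a b hab => ?_⟩
      · rw [Ideal.eq_top_iff_one, ← hQ, ht]; trivial
      · simp only [hQ] at hab ⊢
        exact hP3 a b hab
    have := (h Q hQ').1
    rwa [hQP] at this
  have H2 : PrimeHyp Rᵐᵒᵖ (moduleKdim R R) := by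
    rintro P ⟨hP1, hP2, hP3⟩
    let Q : TwoSidedIdeal R := TwoSidedIdeal.mk' {x | MulOpposite.op x ∈ P} P.zero_mem
      (fun ha hb => P.add_mem ha hb) (fun ha => P.neg_mem ha) (fun ha => hP2 _ ha _)
      (fun ha => P.mul_mem_left _ ha)
    have hQ : ∀ x, x ∈ Q ↔ MulOpposite.op x ∈ P := fun x => TwoSidedIdeal.mem_mk' _ _ _ _ _ _ _
    have hQP : tsOpIdeal Q = P := by
      ext x
      exact hQ x.unop
    have hQ' : IsPrimeTS Q := by
      refine ⟨fun ht => hP1 ?_, fun a b hab => ?_⟩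
      · rw [Ideal.eq_top_iff_one, ← MulOpposite.op_one, ← hQ, ht]; trivial
      · simp only [hQ] at hab ⊢
        refine (hP3 (MulOpposite.op b) (MulOpposite.op a) fun r => ?_).symm
        have := hab r.unop
        simpa [mul_assoc] using this
    have := (h Q hQ').2
    rwa [hQP] at this
  haveI : Module.Finite (Subring.center R) Rᵐᵒᵖ :=
    Module.Finite.equiv (MulOpposite.opLinearEquiv (Subring.center R) (M := R))
  exact ⟨fun M _ _ _ _ => main_mod (A := Subring.center R) H1 M,
    fun M _ _ _ _ => main_mod (A := Subring.center R) H2 M⟩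
end

section
/- Let R be a noetherian ring which is a finite module over its center Z(R), let P be a prime ideal of R with p = P ∩ Z(R), and let {x_1,...,x_t} be a maximal Z(R)-regular sequence on R contained in P. Then G_{Z(R)}(p,R) ≤ min(j^ℓ_R(R/P), j^r_R(R/P)), where j denotes homological grade. -/
universe u

/-- The grade `G_C(I, M)`: the supremum of the lengths of `M`-regular sequences
consisting of elements of the ideal `I`. -/
noncomputable def cGrade {C : Type*} [CommRing C] (I : Ideal C) (M : Type*)
    [AddCommGroup M] [Module C M] : ℕ∞ :=
  sSup {n : ℕ∞ | ∃ rs : List C, n = rs.length ∧ (∀ x ∈ rs, x ∈ I) ∧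
    RingTheory.Sequence.IsRegular M rs}

/-- `M` is a maximal Cohen-Macaulay `C`-module: for every maximal ideal `m` of `C`,
the `m`-grade of `M` equals the height of `m` (that is, `Kdim (C_m)`). -/
def IsMaximalCohenMacaulay (C : Type*) [CommRing C] (M : Type*)
    [AddCommGroup M] [Module C M] : Prop :=
  ∀ m : Ideal C, m.IsMaximal → cGrade m M = cHeight m

universe w

section Aux

open CategoryTheory
open scoped ModuleCat.Algebra Pointwise

theorem ext_subsingleton_aux {C : Type u} [CommRing C] {S : Type u} [Ring S] [Algebra C S]
    [HasExt.{w} (ModuleCat.{u} S)] (M : ModuleCat.{u} S) (rs : List C) :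
    ∀ (N : ModuleCat.{u} S), (∀ x ∈ rs, ∀ m : M, algebraMap C S x • m = 0) →
      RingTheory.Sequence.IsWeaklyRegular N rs → ∀ i < rs.length,
      Subsingleton (Abelian.Ext M N i) := by
  induction rs with
  | nil => intro N _ _ i hi; simp at hi
  | cons x rs ih =>
    intro N hM hreg i hi
    rw [RingTheory.Sequence.isWeaklyRegular_cons_iff] at hreg
    obtain ⟨h1, h2⟩ := hreg
    let f : N ⟶ N := x • 𝟙 N
    have hf : ∀ n : N, f n = x • n := fun n => rfl
    let K : Submodule S N := LinearMap.range f.hom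
    let Q : ModuleCat.{u} S := ModuleCat.of S (N ⧸ K)
    let g : N ⟶ Q := ModuleCat.ofHom K.mkQ
    have hw : f ≫ g = 0 := by
      ext n
      exact (Submodule.Quotient.mk_eq_zero K).2 ⟨n, rfl⟩
    let T : ShortComplex (ModuleCat.{u} S) := ShortComplex.mk f g hw
    have hT : T.ShortExact :=
      { exact := (ShortComplex.ShortExact.moduleCat_exact_iff_function_exact _).mpr
          fun n => (Submodule.Quotient.mk_eq_zero K)
        mono_f := (ModuleCat.mono_iff_injective _).mpr h1
        epi_g := (ModuleCat.epi_iff_surjective _).mpr (Submodule.mkQ_surjective K) }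
    have hK : ∀ n : N, n ∈ (x • (⊤ : Submodule C N)) ↔ n ∈ K := by
      intro n
      rw [Submodule.mem_smul_pointwise_iff_exists]
      constructor
      · rintro ⟨b, -, rfl⟩; exact ⟨b, rfl⟩
      · rintro ⟨b, rfl⟩; exact ⟨b, trivial, rfl⟩
    let e : QuotSMulTop x N ≃+ Q :=
      QuotientAddGroup.congr (x • (⊤ : Submodule C N)).toAddSubgroup K.toAddSubgroup
        (AddEquiv.refl N) (by
          ext n
          simp only [AddSubgroup.mem_map]
          constructor
          · rintro ⟨m, hm, rfl⟩; exact (hK m).1 hm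
          · intro hn; exact ⟨n, (hK n).2 hn, rfl⟩)
    have h3 : RingTheory.Sequence.IsWeaklyRegular Q rs := by
      refine (AddEquiv.isWeaklyRegular_congr (e := e) ?_).1 h2
      refine List.forall₂_same.mpr fun r _ y => ?_
      obtain ⟨n, rfl⟩ := Submodule.Quotient.mk_surjective _ y
      rfl
    have hzero : (x • 𝟙 M : M ⟶ M) = 0 := by
      ext m
      exact hM x (by simp) m
    have key : ∀ a : Abelian.Ext M N i, a.comp (Abelian.Ext.mk₀ T.f) (add_zero i) = 0 := by
      intro a
      have e1 : a.comp (Abelian.Ext.mk₀ T.f) (add_zero i) = x • a :=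
        (Abelian.Ext.smul_eq_comp_mk₀ a x).symm
      have e2 : x • a = (Abelian.Ext.mk₀ (x • 𝟙 M)).comp a (zero_add i) := by
        rw [Abelian.Ext.mk₀_smul, Abelian.Ext.smul_comp, Abelian.Ext.mk₀_id_comp]
      rw [e1, e2, hzero, Abelian.Ext.mk₀_zero, Abelian.Ext.zero_comp]
    refine subsingleton_of_forall_eq 0 fun a => ?_
    cases i with
    | zero =>
      have hm : Mono T.f := hT.mono_f
      apply Abelian.Ext.postcomp_mk₀_injective_of_mono M T.f
      rw [map_zero]
      exact key a
    | succ i =>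
      obtain ⟨b, rfl⟩ := Abelian.Ext.covariant_sequence_exact₁ M hT a (key a) rfl
      have := ih Q (fun y hy => hM y (List.mem_cons_of_mem _ hy)) h3 i (by simpa using hi)
      rw [Subsingleton.elim b 0, Abelian.Ext.zero_comp]

theorem le_homGrade_aux {C : Type u} [CommRing C] {S : Type u} [Ring S] [Algebra C S]
    (M : Type u) [AddCommGroup M] [Module S M] (rs : List C)
    (hM : ∀ x ∈ rs, ∀ m : M, algebraMap C S x • m = 0)
    (hreg : RingTheory.Sequence.IsWeaklyRegular S rs) :
    (rs.length : ℕ∞) ≤ homGrade S M := by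
  refine le_sInf ?_
  rintro _ ⟨i, rfl, hi⟩
  by_contra hlt
  apply hi
  have hlt' : i < rs.length := by exact_mod_cast not_le.1 hlt
  letI : HasDerivedCategory (ModuleCat S) := HasDerivedCategory.standard _
  letI : HasExt (ModuleCat S) := hasExt_of_hasDerivedCategory _
  refine ext_subsingleton_aux (ModuleCat.of S M) rs (ModuleCat.of S S) hM ?_ i hlt'
  refine (@AddEquiv.isWeaklyRegular_congr C C S (ModuleCat.of S S) _ _ _ _ _
    (ModuleCat.Algebra.instModuleCarrier) (AddEquiv.refl S) rs rs ?_).1 hreg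
  refine List.forall₂_same.mpr fun r _ y => ?_
  exact Algebra.smul_def r y

end Aux

/-- Let `R` be a noetherian ring which is a finite module over its centre `Z(R)`, let
`P` be a prime ideal of `R` with `p = P ∩ Z(R)`, and let `xs` be a maximal
`Z(R)`-regular sequence on `R` contained in `P`.  Then
`G_{Z(R)}(p, R) ≤ min (j^ℓ_R(R/P), j^r_R(R/P))`. -/
theorem grade_le_min_homGrade (R : Type u) [Ring R] [IsNoetherianRing R]
    [Module.Finite (Subring.center R) R]
    (P : TwoSidedIdeal R) (hP : IsPrimeTS P)
    (xs : List (Subring.center R)) (hin : ∀ x ∈ xs, (x : R) ∈ P)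
    (hreg : RingTheory.Sequence.IsRegular R xs)
    (hmax : ∀ y : Subring.center R, (y : R) ∈ P →
      ¬ RingTheory.Sequence.IsRegular R (xs ++ [y])) :
    cGrade (contractTS (C := Subring.center R) P) R ≤
      min (homGrade R (R ⧸ TwoSidedIdeal.asIdeal P))
        (homGrade Rᵐᵒᵖ (Rᵐᵒᵖ ⧸ tsOpIdeal P)) := by
  refine sSup_le ?_
  rintro _ ⟨rs, rfl, hrs, hr⟩
  refine le_min ?_ ?_
  · refine le_homGrade_aux _ rs ?_ hr.toIsWeaklyRegular
    intro x hx m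
    obtain ⟨m, rfl⟩ := Submodule.Quotient.mk_surjective _ m
    refine (Submodule.Quotient.mk_eq_zero _).2 ?_
    have h : (x : R) ∈ P := by
      have := hrs x hx
      exact TwoSidedIdeal.mem_asIdeal.1 (Ideal.mem_comap.1 this)
    exact TwoSidedIdeal.mem_asIdeal.2 (P.mul_mem_right _ _ h)
  · refine le_homGrade_aux _ rs ?_ ?_
    · intro x hx m
      obtain ⟨m, rfl⟩ := Submodule.Quotient.mk_surjective _ m
      refine (Submodule.Quotient.mk_eq_zero _).2 ?_
      have h : (x : R) ∈ P := by
        have := hrs x hx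
        exact TwoSidedIdeal.mem_asIdeal.1 (Ideal.mem_comap.1 this)
      exact P.mul_mem_left _ _ h
    · exact ((MulOpposite.opLinearEquiv (Subring.center R)).isWeaklyRegular_congr rs).1
        hr.toIsWeaklyRegular
end
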